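/- Let F be Thompson's group and let H be the subgroup of F consisting of elements whose slopes at 0 and 1 coincide. Then: (i) H is generated by three elements; (ii) the commutator subgroup H' of H is simple; and (iii) H' consists precisely of the elements of F whose support has closure contained in the open interval (0,1); in particular H' equals the commutator subgroup F' of F. -/

import Mathlib

/-! ### Letters, labellings and quasi-periodicity -/

/-- The four letters `a, b, a⁻¹, b⁻¹`. -/
inductive Letter : Type
  | a : Letter
  | b : Letter
  | A : Letter  -- `a⁻¹`
  | B : Letter  -- `b⁻¹`
  deriving DecidableEq

/-- The formal inverse of a letter. -/
def Letter.inv : Letter → Letter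
  | .a => .A
  | .A => .a
  | .b => .B
  | .B => .b

/-- We encode the set of half-integers `½ℤ` by `ℤ` via `m ↦ m / 2`; integer points
correspond to even indices and proper half-integer points to odd indices.
A labelling assigns `a^{±1}` to integer points and `b^{±1}` to half-integer points. -/
def IsLabelling (ρ : ℤ → Letter) : Prop :=
  ∀ m : ℤ, (Even m → ρ m = Letter.a ∨ ρ m = Letter.A) ∧
    (Odd m → ρ m = Letter.b ∨ ρ m = Letter.B)

/-- The word of the labelling `ρ` along the block `{k, k+1, …, k+n}` (in the
half-integer encoding, the block of size `n+1` starting at `k/2`). -/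
def blockWord (ρ : ℤ → Letter) (k : ℤ) (n : ℕ) : List Letter :=
  (List.range (n + 1)).map fun i => ρ (k + i)

/-- The formal inverse of a word: reverse the word and invert each letter. -/
def wordInv (w : List Letter) : List Letter :=
  (w.map Letter.inv).reverse

/-- A labelling is quasi-periodic if (1) every subword of the labelling appears as a
subword (string of consecutive letters) of every sufficiently large block, and (2) the
formal inverse of every subword of the labelling is again a subword of the labelling. -/
def IsQuasiPeriodic (ρ : ℤ → Letter) : Prop :=
  IsLabelling ρ ∧
    (∀ (k : ℤ) (n : ℕ), ∃ N : ℕ, ∀ (k' : ℤ) (n' : ℕ), N ≤ n' + 1 →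
      (blockWord ρ k n) <:+: (blockWord ρ k' n')) ∧
    (∀ (k : ℤ) (n : ℕ), ∃ k' : ℤ, blockWord ρ k' n = wordInv (blockWord ρ k n))

/-! ### Thompson's group `F` and the subgroup `H`

Orientation-preserving homeomorphisms of `[0,1]` are realised as order-automorphisms
of `ℝ` that are the identity outside `[0,1]`; orientation-preserving homeomorphisms of
the line are order-automorphisms of `ℝ`. -/

/-- A dyadic rational real number, i.e. an element of `ℤ[1/2]`. -/
def IsDyadic (x : ℝ) : Prop :=
  ∃ (a : ℤ) (b : ℕ), x = (a : ℝ) / 2 ^ b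

/-- Membership in Thompson's group `F`: the identity outside `[0,1]`, and on `[0,1]`
piecewise linear with breakpoints in `ℤ[1/2]` and slopes integer powers of `2`. -/
def InThompsonF (f : ℝ ≃o ℝ) : Prop :=
  (∀ x : ℝ, x ∉ Set.Icc (0 : ℝ) 1 → f x = x) ∧
    ∃ (m : ℕ) (x : Fin (m + 1) → ℝ), x 0 = 0 ∧ x (Fin.last m) = 1 ∧ StrictMono x ∧
      (∀ i, IsDyadic (x i)) ∧
      ∀ i : Fin m, ∃ (k : ℤ) (c : ℝ),
        ∀ t ∈ Set.Icc (x i.castSucc) (x i.succ), f t = 2 ^ k * t + c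

/-- Membership in the subgroup `H ≤ F` of elements whose slopes at `0` and `1`
coincide. -/
def InH (f : ℝ ≃o ℝ) : Prop :=
  InThompsonF f ∧
    ∃ (k : ℤ) (ε : ℝ), 0 < ε ∧ (∀ t ∈ Set.Icc (0 : ℝ) ε, f t = 2 ^ k * t) ∧
      ∀ t ∈ Set.Icc (1 - ε) (1 : ℝ), f t = 1 + 2 ^ k * (t - 1)

/-! ### The generators of `G_ρ` -/

/-- `ζ` is the homeomorphism of `ℝ` which on each `[n, n+1]` is the conjugate of `ν`
(a homeomorphism of `[0,1]`) by the orientation-preserving isometry `[n,n+1] → [0,1]`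
if `ρ(n + ½) = b`, and by the orientation-reversing isometry if `ρ(n + ½) = b⁻¹`.
(In the encoding of `½ℤ` by `ℤ`, the point `n + ½` has index `2n + 1`.) -/
def IsZeta (ρ : ℤ → Letter) (ν ζ : ℝ ≃o ℝ) : Prop :=
  ∀ n : ℤ, ∀ x ∈ Set.Icc (n : ℝ) (n + 1),
    (ρ (2 * n + 1) = Letter.b → ζ x = n + ν (x - n)) ∧
    (ρ (2 * n + 1) = Letter.B → ζ x = (n + 1) - ν ((n + 1) - x))

/-- `χ` is the homeomorphism of `ℝ` which on each `[n-½, n+½]` is the conjugate of `ν`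
by the orientation-preserving isometry `[n-½, n+½] → [0,1]` if `ρ(n) = a`, and by the
orientation-reversing isometry if `ρ(n) = a⁻¹`. -/
def IsChi (ρ : ℤ → Letter) (ν χ : ℝ ≃o ℝ) : Prop :=
  ∀ n : ℤ, ∀ x ∈ Set.Icc ((n : ℝ) - 1/2) ((n : ℝ) + 1/2),
    (ρ (2 * n) = Letter.a → χ x = ((n : ℝ) - 1/2) + ν (x - ((n : ℝ) - 1/2))) ∧
    (ρ (2 * n) = Letter.A → χ x = ((n : ℝ) + 1/2) - ν (((n : ℝ) + 1/2) - x))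

/-! ### Bounded cohomology in degree two -/

/-- A bounded 2-cocycle on `G` with trivial real coefficients. -/
def IsBounded2Cocycle {G : Type*} [Group G] (ω : G → G → ℝ) : Prop :=
  (∃ C : ℝ, ∀ g h : G, |ω g h| ≤ C) ∧
    ∀ g₁ g₂ g₃ : G, ω g₂ g₃ - ω (g₁ * g₂) g₃ + ω g₁ (g₂ * g₃) - ω g₁ g₂ = 0

/-- `ω` is the coboundary of a bounded real-valued function. -/
def IsCoboundaryOfBounded {G : Type*} [Group G] (ω : G → G → ℝ) : Prop :=
  ∃ φ : G → ℝ, (∃ C : ℝ, ∀ g : G, |φ g| ≤ C) ∧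
    ∀ g h : G, ω g h = φ h - φ (g * h) + φ g

/-- A group is 2-boundedly acyclic if `H²_b(G; ℝ) = 0`, i.e. every bounded 2-cocycle is
the coboundary of a bounded function. -/
def Is2BoundedlyAcyclic (G : Type*) [Group G] : Prop :=
  ∀ ω : G → G → ℝ, IsBounded2Cocycle ω → IsCoboundaryOfBounded ω

/-- A 2-cocycle is homogeneous if it vanishes on powers of a single element. -/
def IsHomogeneous {G : Type*} [Group G] (ω : G → G → ℝ) : Prop :=
  ∀ (g : G) (i j : ℤ), ω (g ^ i) (g ^ j) = 0

/-! ### Rotations -/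

noncomputable def rotFun (a s t : ℝ) : ℝ := max t (min (min (2*t-a) (t+s)) ((t+a+4*s)/2))
noncomputable def rotInv (a s t : ℝ) : ℝ := min t (max (max ((t+a)/2) (t-s)) (2*t-a-4*s))

lemma rotFun_rotInv (a s t : ℝ) : rotFun a s (rotInv a s t) = t := by
  unfold rotFun rotInv
  rcases min_cases t (max (max ((t+a)/2) (t-s)) (2*t-a-4*s)) with h | h <;> rw [h.1]
  · have : t ≤ max (max ((t+a)/2) (t-s)) (2*t-a-4*s) := h.2
    rw [max_eq_left]
    simp only [le_max_iff] at this
    simp only [min_le_iff]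
    rcases this with (h | h) | h
    · left; left; linarith
    · left; right; linarith
    · right; linarith
  · have h2 := h.2
    simp only [max_lt_iff] at h2
    rcases max_cases (max ((t+a)/2) (t-s)) (2*t-a-4*s) with h3 | h3 <;> rw [h3.1]
    · rcases max_cases ((t+a)/2) (t-s) with h4 | h4 <;> rw [h4.1] at h3 ⊢
      · rw [min_eq_left (a := 2 * ((t+a)/2) - a), min_eq_left, max_eq_right] <;> linarith
      · rw [min_eq_right (a := 2 * (t-s) - a), min_eq_left, max_eq_right] <;> linarith
    · have h4 := h3.2
      simp only [max_lt_iff] at h4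
      rw [min_eq_right (b := (2*t-a-4*s + a + 4*s)/2), max_eq_right]
      · linarith
      · linarith
      · simp only [le_min_iff]; constructor <;> linarith

lemma rotInv_rotFun (a s t : ℝ) : rotInv a s (rotFun a s t) = t := by
  unfold rotFun rotInv
  rcases max_cases t (min (min (2*t-a) (t+s)) ((t+a+4*s)/2)) with h | h <;> rw [h.1]
  · have := h.2
    rw [min_eq_left]
    simp only [min_le_iff] at this
    simp only [le_max_iff]
    rcases this with (h | h) | h
    · left; left; linarith
    · left; right; linarith
    · right; linarith
  · have h2 := h.2
    simp only [lt_min_iff] at h2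
    rcases min_cases (min (2*t-a) (t+s)) ((t+a+4*s)/2) with h3 | h3 <;> rw [h3.1]
    · rcases min_cases (2*t-a) (t+s) with h4 | h4 <;> rw [h4.1] at h3 ⊢
      · rw [max_eq_left (a := (2*t-a+a)/2), max_eq_left, min_eq_right] <;> linarith
      · rw [max_eq_right (a := (t+s+a)/2), max_eq_left, min_eq_right] <;> linarith
    · have h4 := h3.2
      simp only [lt_min_iff] at h4
      rw [max_eq_right (b := 2*((t+a+4*s)/2)-a-4*s), min_eq_right]
      · linarith
      · linarith
      · simp only [max_le_iff]; constructor <;> linarith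

lemma rotFun_mono (a s : ℝ) : Monotone (rotFun a s) := by
  intro x y h
  unfold rotFun
  gcongr

lemma rotInv_mono (a s : ℝ) : Monotone (rotInv a s) := by
  intro x y h
  unfold rotInv
  gcongr

/-- The basic rotation supported on `[a, a+4s]`. -/
noncomputable def rot (a s : ℝ) : ℝ ≃o ℝ where
  toFun := rotFun a s
  invFun := rotInv a s
  left_inv := rotInv_rotFun a s
  right_inv := rotFun_rotInv a s
  map_rel_iff' := by
    intro x y
    constructor
    · intro h
      have := rotInv_mono a s h
      simpa [rotInv_rotFun] using this
    · intro h; exact rotFun_mono a s h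

lemma rot_apply (a s t : ℝ) : rot a s t = max t (min (min (2*t-a) (t+s)) ((t+a+4*s)/2)) := rfl

lemma rot_left {a s t : ℝ} (h : t ≤ a) : rot a s t = t := by
  rw [rot_apply, max_eq_left]
  simp only [min_le_iff]; left; left; linarith

lemma rot_right {a s t : ℝ} (h : a + 4 * s ≤ t) : rot a s t = t := by
  rw [rot_apply, max_eq_left]
  simp only [min_le_iff]; right; linarith

lemma rot_one {a s t : ℝ} (h : a ≤ t) (h' : t ≤ a + s) : rot a s t = 2 * t - a := by
  rw [rot_apply, min_eq_left (a := 2 * t - a), min_eq_left, max_eq_right] <;> linarith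

lemma rot_two {a s t : ℝ} (hs : 0 ≤ s) (h : a + s ≤ t) (h' : t ≤ a + 2 * s) :
    rot a s t = t + s := by
  rw [rot_apply, min_eq_right (a := 2 * t - a), min_eq_left, max_eq_right] <;> linarith

lemma rot_three {a s t : ℝ} (hs : 0 ≤ s) (h : a + 2 * s ≤ t) (h' : t ≤ a + 4 * s) :
    rot a s t = (t + a + 4 * s) / 2 := by
  rw [rot_apply, min_eq_right (a := 2 * t - a), min_eq_right, max_eq_right] <;> linarith

lemma rot_mem {a s t : ℝ} (h : a ≤ t) (h' : t ≤ a + 4 * s) :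
    a ≤ rot a s t ∧ rot a s t ≤ a + 4 * s := by
  have h1 := (rot a s).monotone h
  have h2 := (rot a s).monotone h'
  rw [rot_left le_rfl] at h1
  rw [rot_right le_rfl] at h2
  exact ⟨h1, h2⟩

lemma rot_lt {a s t : ℝ} (h : a < t) (h' : t < a + 4 * s) : t < rot a s t := by
  rw [rot_apply]
  apply lt_max_of_lt_right
  simp only [lt_min_iff]
  refine ⟨⟨?_, ?_⟩, ?_⟩ <;> linarith

lemma rot_conj {a s a' u : ℝ} (hs : 0 ≤ s) (hu : 0 < u) (k : ℝ ≃o ℝ)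
    (hk : ∀ t, a ≤ t → t ≤ a + 4 * s → k t = a' + u * (t - a)) :
    k * rot a s * k⁻¹ = rot a' (u * s) := by
  rw [mul_inv_eq_iff_eq_mul]
  ext t
  rw [RelIso.mul_apply, RelIso.mul_apply]
  have ka : k a = a' := by rw [hk a le_rfl (by linarith)]; ring
  have kb : k (a + 4 * s) = a' + 4 * (u * s) := by rw [hk _ (by linarith) le_rfl]; ring
  have hus : 0 ≤ u * s := by positivity
  rcases le_total t a with h | h
  · rw [rot_left h, rot_left]
    rw [← ka]; exact k.monotone h
  rcases le_total (a + 4 * s) t with h' | h'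
  · rw [rot_right h', rot_right]
    rw [← kb]; exact k.monotone h'
  have hm := rot_mem h h'
  rw [hk _ hm.1 hm.2, hk t h h']
  have e0 : 0 ≤ u * (t - a) := mul_nonneg hu.le (by linarith)
  rcases le_total t (a + s) with h1 | h1
  · have e1 : u * (t - a) ≤ u * s := mul_le_mul_of_nonneg_left (by linarith) hu.le
    rw [rot_one h h1, rot_one (by linarith) (by linarith)]; ring
  have e1 : u * s ≤ u * (t - a) := mul_le_mul_of_nonneg_left (by linarith) hu.le
  rcases le_total t (a + 2 * s) with h2 | h2
  · have e2 : u * (t - a) ≤ u * (2 * s) := mul_le_mul_of_nonneg_left (by linarith) hu.le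
    rw [rot_two hs h1 h2, rot_two hus (by linarith) (by linarith)]; ring
  · have e2 : u * (2 * s) ≤ u * (t - a) := mul_le_mul_of_nonneg_left (by linarith) hu.le
    have e3 : u * (t - a) ≤ u * (4 * s) := mul_le_mul_of_nonneg_left (by linarith) hu.le
    rw [rot_three hs h2 h', rot_three hus (by linarith) (by linarith)]; ring

lemma rot_pentagon {a s : ℝ} (hs : 0 ≤ s) :
    rot a s * rot a s = rot (a + 2 * s) (s / 2) * rot a s * rot a (s / 2) := by
  ext t
  simp only [RelIso.mul_apply]
  rcases le_total t a with h | h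
  · rw [rot_left (s := s / 2) h, rot_left h, rot_left h, rot_left (by linarith)]
  rcases le_total (a + 4 * s) t with h' | h'
  · rw [rot_right (a := a) (s := s / 2) (by linarith), rot_right h', rot_right h', rot_right (by linarith)]
  rcases le_total t (a + s / 2) with h1 | h1
  · rw [rot_one (s := s / 2) h h1, rot_one (t := t) h (by linarith),
      rot_one (t := 2 * t - a) (by linarith) (by linarith), rot_left (by linarith)]
  rcases le_total t (a + s) with h2 | h2
  · rw [rot_two (t := t) (s := s / 2) (by linarith) h1 (by linarith),
      rot_one (t := t) h (by linarith),
      rot_two (t := 2 * t - a) hs (by linarith) (by linarith),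
      rot_two (t := t + s / 2) hs (by linarith) (by linarith), rot_one (by linarith) (by linarith)]
    ring
  rcases le_total t (a + 2 * s) with h3 | h3
  · rw [rot_three (t := t) (s := s / 2) (by linarith) (by linarith) (by linarith),
      rot_two (t := t) hs h2 h3,
      rot_three (t := t + s) hs (by linarith) (by linarith),
      rot_two (t := (t + a + 4 * (s / 2)) / 2) hs (by linarith) (by linarith),
      rot_two (by linarith) (by linarith) (by linarith)]
    ring
  · rw [rot_right (t := t) (a := a) (s := s / 2) (by linarith),
      rot_three (t := t) hs h3 h',
      rot_three (t := (t + a + 4 * s) / 2) (a := a) hs (by linarith) (by linarith),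
      rot_three (by linarith) (by linarith) (by linarith)]
    ring

/-! ### Standard dyadic partitions -/

noncomputable def ins (i : ℕ) (p : ℕ → ℝ) : ℕ → ℝ := fun j =>
  if j ≤ i then p j else if j = i + 1 then (p i + p (i + 1)) / 2 else p (j - 1)

/-- `g` maps the partition `p` affinely to the partition `q` (in coordinates rescaled to `[1/4,3/4]`). -/
def Maps (g : ℝ ≃o ℝ) (p q : ℕ → ℝ) : Prop :=
  ∀ j : ℕ, ∀ t : ℝ, 0 ≤ t → t ≤ 1 →
    g (1/4 + (p j + t * (p (j+1) - p j)) / 2) = 1/4 + (q j + t * (q (j+1) - q j)) / 2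

inductive Std : ℕ → (ℕ → ℝ) → Prop
  | base : Std 1 (fun j => if j = 0 then 0 else 1)
  | step (n : ℕ) (p : ℕ → ℝ) (i : ℕ) : Std n p → i < n → Std (n + 1) (ins i p)

lemma Maps.mul {g h : ℝ ≃o ℝ} {p q r : ℕ → ℝ} (hh : Maps h q r) (hg : Maps g p q) :
    Maps (h * g) p r := by
  intro j t h0 h1
  rw [RelIso.mul_apply, hg j t h0 h1, hh j t h0 h1]

lemma Maps.inv {g : ℝ ≃o ℝ} {p q : ℕ → ℝ} (hg : Maps g p q) : Maps g⁻¹ q p := by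
  intro j t h0 h1
  rw [← hg j t h0 h1, RelIso.inv_apply_self]

lemma Maps.ins {g : ℝ ≃o ℝ} {p q : ℕ → ℝ} (hg : Maps g p q) (i : ℕ) :
    Maps g (ins i p) (ins i q) := by
  intro j t h0 h1
  unfold _root_.ins
  rcases lt_trichotomy j i with h | h | h
  · have e1 : j ≤ i := h.le
    have e2 : j + 1 ≤ i := h
    simp only [e1, e2, if_true]
    exact hg j t h0 h1
  · subst h
    have := hg j (t / 2) (by linarith) (by linarith)
    simp only [le_refl, if_true, Nat.not_succ_le_self, if_false]
    convert this using 2 <;> ring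
  · rcases Nat.lt_or_ge (i + 1) j with h' | h'
    · obtain ⟨m, rfl⟩ : ∃ m, j = m + 1 := ⟨j - 1, by omega⟩
      have e1 : ¬ (m + 1 ≤ i) := by omega
      have e2 : ¬ (m + 1 + 1 ≤ i) := by omega
      have e3 : ¬ (m + 1 = i + 1) := by omega
      have e4 : ¬ (m + 1 + 1 = i + 1) := by omega
      simp only [e1, e2, e3, e4, if_false, Nat.add_sub_cancel]
      exact hg m t h0 h1
    · obtain rfl : j = i + 1 := by omega
      have := hg i ((1 + t) / 2) (by linarith) (by linarith)
      have e1 : ¬ (i + 1 ≤ i) := by omega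
      have e2 : ¬ (i + 1 + 1 ≤ i) := by omega
      have e4 : ¬ (i + 1 + 1 = i + 1) := by omega
      simp only [e1, e2, e4, if_false, if_true, Nat.add_sub_cancel]
      convert this using 2 <;> ring

/-- right caterpillar -/
noncomputable def car (n j : ℕ) : ℝ := if j < n then 1 - (1/2)^j else 1

noncomputable def XX (i : ℕ) : ℝ ≃o ℝ := rot (3/4 - (1/2)^i/2) ((1/2)^i/8)

lemma ins_car_last (n : ℕ) : ins n (car (n + 1)) = car (n + 2) := by
  funext j
  unfold ins car
  rcases lt_trichotomy j (n+1) with h | h | h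
  · have e1 : j ≤ n := by omega
    have e2 : j < n + 2 := by omega
    simp [e1, h, e2]
  · subst h
    simp [pow_succ]; ring
  · have e1 : ¬ j ≤ n := by omega
    have e2 : ¬ j < n + 2 := by omega
    have e3 : ¬ j = n + 1 := by omega
    have e4 : ¬ j - 1 < n + 1 := by omega
    simp [e1, e2, e3, e4]

lemma maps_XX (n i : ℕ) (hi : i + 1 < n) : Maps (XX i) (ins i (car n)) (car (n + 1)) := by
  intro j t h0 h1
  unfold XX
  have hp : (0:ℝ) < (1/2)^i := by positivity
  rcases lt_trichotomy j i with h | h | h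
  · have e1 : j ≤ i := h.le
    have e2 : j + 1 ≤ i := h
    have e3 : j < n := by omega
    have e4 : j + 1 < n := by omega
    have e5 : j < n + 1 := by omega
    simp only [ins, car, e1, e2, e3, e4, e5, if_true, Nat.add_lt_add_iff_right]
    rw [rot_left]
    have h2 : (1/2:ℝ)^i ≤ (1/2)^(j+1) := pow_le_pow_of_le_one (by norm_num) (by norm_num) e2
    rw [pow_succ] at h2 ⊢
    have h3 : (0:ℝ) < (1/2)^j := by positivity
    nlinarith
  · subst h
    have e3 : j < n := by omega
    have e5 : j < n + 1 := by omega
    simp only [ins, car, le_refl, hi, e3, e5, if_true, Nat.not_succ_le_self, if_false, Nat.add_lt_add_iff_right]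
    rw [pow_succ] at *
    have h3 : t * (1/2:ℝ)^j ≤ (1/2)^j := by nlinarith
    have h4 : 0 ≤ t * (1/2:ℝ)^j := by positivity
    rw [rot_one]
    · ring
    · linarith
    · linarith
  · rcases Nat.lt_or_ge (i + 1) j with h' | h'
    · obtain ⟨m, rfl⟩ : ∃ m, j = m + 1 := ⟨j - 1, by omega⟩
      have e1 : ¬ (m + 1 ≤ i) := by omega
      have e2 : ¬ (m + 1 + 1 ≤ i) := by omega
      have e3 : ¬ (m + 1 = i + 1) := by omega
      have e4 : ¬ (m + 1 + 1 = i + 1) := by omega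
      have key : ∀ y : ℝ, 1 - (1/2:ℝ)^(i+1) ≤ y → y ≤ 1 →
          rot (3/4 - (1/2)^i/2) ((1/2)^i/8) (1/4 + y / 2) = 1/4 + ((y + 1)/2) / 2 := by
        intro y hy hy1
        rw [pow_succ] at hy
        rw [rot_three (by linarith) (by linarith) (by linarith)]
        ring
      have kk : ∀ m, i + 1 ≤ m → 1 - (1/2:ℝ)^(i+1) ≤ car n m ∧ car n m ≤ 1 ∧
          car (n+1) (m+1) = (car n m + 1) / 2 := by
        intro m hm
        have h2 : (1/2:ℝ)^m ≤ (1/2)^(i+1) := pow_le_pow_of_le_one (by norm_num) (by norm_num) hm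
        have h3 : (0:ℝ) < (1/2)^m := by positivity
        have h4 : (0:ℝ) < (1/2)^(i+1) := by positivity
        unfold car
        by_cases hmn : m < n
        · simp only [hmn, if_true, Nat.add_lt_add_iff_right]
          refine ⟨by linarith, by linarith, by rw [pow_succ]; ring⟩
        · simp only [hmn, if_false, Nat.add_lt_add_iff_right]
          refine ⟨by linarith, by linarith, by ring⟩
      obtain ⟨a1, a2, a3⟩ := kk m (by omega)
      obtain ⟨b1, b2, b3⟩ := kk (m+1) (by omega)
      simp only [ins, e1, e2, e3, e4, if_false, Nat.add_sub_cancel]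
      rw [a3, b3, key]
      · ring
      · nlinarith
      · nlinarith
    · obtain rfl : j = i + 1 := by omega
      have e1 : ¬ (i + 1 ≤ i) := by omega
      have e2 : ¬ (i + 1 + 1 ≤ i) := by omega
      have e4 : ¬ (i + 1 + 1 = i + 1) := by omega
      have e5 : i < n := by omega
      have e6 : i + 1 < n + 1 := by omega
      simp only [ins, car, e1, e2, e4, e5, e6, hi, if_false, if_true, Nat.add_sub_cancel, Nat.add_lt_add_iff_right]
      simp only [pow_succ] at *
      have h3 : t * (1/2:ℝ)^i ≤ (1/2)^i := by nlinarith
      have h4 : 0 ≤ t * (1/2:ℝ)^i := by positivity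
      rw [rot_two]
      · ring
      · linarith
      · linarith
      · linarith

lemma std_maps_car {n : ℕ} {p : ℕ → ℝ} (h : Std n p) :
    1 ≤ n ∧ ∃ g ∈ Subgroup.closure (Set.range XX), Maps g p (car n) := by
  induction h with
  | base =>
    refine ⟨le_rfl, 1, Subgroup.one_mem _, ?_⟩
    have : (fun j : ℕ => if j = 0 then (0:ℝ) else 1) = car 1 := by
      funext j
      rcases j with _ | j <;> simp [car]
    rw [this]
    intro j t _ _
    rfl
  | step n p i hp hi ih =>
    obtain ⟨hn, g, hg, hm⟩ := ih
    refine ⟨by omega, ?_⟩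
    have hm' := hm.ins i
    by_cases hin : i + 1 < n
    · refine ⟨XX i * g, Subgroup.mul_mem _ (Subgroup.subset_closure ⟨i, rfl⟩) hg, ?_⟩
      exact (maps_XX n i hin).mul hm'
    · obtain rfl : n = i + 1 := by omega
      rw [ins_car_last] at hm'
      exact ⟨g, hg, hm'⟩

lemma std_ends {n : ℕ} {p : ℕ → ℝ} (h : Std n p) :
    p 0 = 0 ∧ ∀ j, n ≤ j → p j = 1 := by
  induction h with
  | base => exact ⟨by simp, fun j hj => if_neg (by omega)⟩
  | step n p i hp hi ih =>
    refine ⟨by simp [ins, ih.1], ?_⟩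
    intro j hj
    have e1 : ¬ j ≤ i := by omega
    have e2 : ¬ j = i + 1 := by omega
    simp only [ins, e1, e2, if_false]
    exact ih.2 _ (by omega)

/-- Two maps inducing the same affine map of partitions coincide on `[1/4,3/4]`. -/
lemma maps_unique {f g : ℝ ≃o ℝ} {n : ℕ} {p q : ℕ → ℝ} (h0 : p 0 = 0) (h1 : p n = 1)
    (hf : Maps f p q) (hg : Maps g p q) (x : ℝ) (hx : 1/4 ≤ x) (hx' : x ≤ 3/4) : f x = g x := by
  set y := 2 * (x - 1/4) with hy
  have hex : ∃ j, y ≤ p j := ⟨n, by rw [h1]; linarith⟩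
  classical
  obtain ⟨j, hj, hj'⟩ : ∃ j, p j ≤ y ∧ y ≤ p (j + 1) := by
    rcases hm : Nat.find hex with _ | m
    · have := Nat.find_spec hex
      rw [hm, h0] at this
      have hy0 : y = 0 := le_antisymm this (by linarith)
      have hex1 : ∃ j, y < p j := ⟨n, by rw [h1, hy0]; norm_num⟩
      rcases hm1 : Nat.find hex1 with _ | m
      · have := Nat.find_spec hex1
        rw [hm1, h0, hy0] at this
        exact absurd this (lt_irrefl _)
      · have h2 := Nat.find_spec hex1
        have h3 := Nat.find_min hex1 (m := m) (by omega)
        rw [hm1] at h2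
        exact ⟨m, not_lt.mp h3, h2.le⟩
    · have h2 := Nat.find_spec hex
      have h3 := Nat.find_min hex (m := m) (by omega)
      rw [hm] at h2
      exact ⟨m, (not_le.mp h3).le, h2⟩
  obtain ⟨t, ht0, ht1, ht⟩ : ∃ t : ℝ, 0 ≤ t ∧ t ≤ 1 ∧ y = p j + t * (p (j+1) - p j) := by
    rcases eq_or_lt_of_le (hj.trans hj') with h | h
    · exact ⟨0, le_rfl, zero_le_one, by linarith⟩
    · refine ⟨(y - p j) / (p (j+1) - p j), div_nonneg (by linarith) (by linarith), ?_, ?_⟩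
      · rw [div_le_one (by linarith)]; linarith
      · rw [div_mul_cancel₀ _ (by linarith)]; ring
  have hxe : x = 1/4 + (p j + t * (p (j+1) - p j)) / 2 := by rw [← ht, hy]; ring
  rw [hxe, hf j t ht0 ht1, hg j t ht0 ht1]

lemma mem_of_maps {f : ℝ ≃o ℝ} (hid : ∀ x, x ∉ Set.Icc (1/4:ℝ) (3/4) → f x = x) {n : ℕ}
    {p q : ℕ → ℝ} (hp : Std n p) (hq : Std n q) (hf : Maps f p q) :
    f ∈ Subgroup.closure (Set.range XX) := by
  obtain ⟨_, g, hg, hgm⟩ := std_maps_car hp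
  obtain ⟨_, h, hh, hhm⟩ := std_maps_car hq
  have hm := hhm.inv.mul hgm
  have hmem := Subgroup.mul_mem _ (Subgroup.inv_mem _ hh) hg
  have hXX : ∀ k ∈ Subgroup.closure (Set.range XX), ∀ x, x ∉ Set.Icc (1/4:ℝ) (3/4) → k x = x := by
    intro k hk
    induction hk using Subgroup.closure_induction with
    | mem k hk =>
      obtain ⟨i, rfl⟩ := hk
      intro x hx
      have h1 : (1/2:ℝ)^i ≤ 1 := pow_le_one₀ (by norm_num) (by norm_num)
      simp only [Set.mem_Icc, not_and_or, not_le] at hx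
      unfold XX
      rcases hx with hx | hx
      · exact rot_left (by linarith)
      · exact rot_right (by linarith)
    | one => intro x _; rfl
    | mul a b _ _ ha hb => intro x hx; rw [RelIso.mul_apply, hb x hx, ha x hx]
    | inv a _ ha =>
      intro x hx
      conv_lhs => rw [← ha x hx]
      rw [RelIso.inv_apply_self]
  have : f = h⁻¹ * g := by
    ext x
    by_cases hx : x ∈ Set.Icc (1/4:ℝ) (3/4)
    · exact maps_unique (std_ends hp).1 ((std_ends hp).2 n le_rfl) hf hm x hx.1 hx.2
    · rw [hid x hx, hXX _ hmem x hx]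
  rw [this]; exact hmem

/-! ### Partitions into standard dyadic intervals are standard -/

lemma std_of_int (M : ℕ) : ∀ (n : ℕ) (Q : ℕ → ℤ), Q 0 = 0 → (∀ j, n ≤ j → Q j = 2^M) →
    (∀ j, j < n → ∃ e : ℕ, (2:ℤ)^e ∣ Q j ∧ Q (j+1) = Q j + 2^e) →
    Std n (fun j => (Q j : ℝ) / 2^M) := by
  intro n
  induction n with
  | zero =>
    intro Q h0 h1
    have := h1 0 le_rfl
    rw [h0] at this
    have h2 : (0:ℤ) < 2^M := by positivity
    omega
  | succ n ih =>
    intro Q h0 h1 hQ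
    have hM : (0:ℝ) < 2^M := by positivity
    rcases Nat.eq_zero_or_pos n with rfl | hn
    · have : (fun j => (Q j : ℝ) / 2^M) = (fun j => if j = 0 then 0 else 1) := by
        funext j
        rcases j with _ | j
        · simp [h0]
        · rw [h1 (j+1) (by omega)]
          simp
      rw [this]; exact Std.base
    choose! e he1 he2 using hQ
    -- find adjacent siblings
    obtain ⟨i, E, hi, hd, hs1, hs2⟩ : ∃ i E : ℕ, i < n ∧ (2:ℤ)^(E+1) ∣ Q i ∧
        Q (i+1) = Q i + 2^E ∧ Q (i+2) = Q i + 2^(E+1) := by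
      obtain ⟨j, hj, hmin⟩ := Finset.exists_min_image (Finset.range (n+1)) e ⟨0, by simp⟩
      simp only [Finset.mem_range] at hj hmin
      have hodd : ∀ (x d : ℕ) (a : ℤ), (2:ℤ)^d ∣ 2^x * (2*a+1) → d ≤ x := by
        intro x d a hdv
        by_contra hlt
        push Not at hlt
        have h3 : (2:ℤ)^(x+1) ∣ 2^x * (2*a+1) := (pow_dvd_pow 2 hlt).trans hdv
        rw [pow_succ] at h3
        have h4 := (mul_dvd_mul_iff_left (by positivity : (2:ℤ)^x ≠ 0)).mp h3
        omega
      obtain ⟨a, ha⟩ := he1 j hj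
      rcases Int.even_or_odd' a with ⟨b, rfl | rfl⟩
      · -- even: next one
        have hjn : j < n := by
          by_contra hcon
          have hjn : j = n := by omega
          subst hjn
          have h3 := h1 (j+1) le_rfl
          have h4 := he2 j hj
          rw [ha, h3] at h4
          have h5 : (2:ℤ)^M = 2^(e j) * (2*b+1) := by rw [h4]; ring
          have h6 : M ≤ e j := hodd _ _ b (by rw [← h5])
          have h7 : (2:ℤ)^M ≤ 2^(e j) := pow_le_pow_right₀ (by norm_num) h6
          have h8 := he2 (j-1) (by omega)
          have h9 := hmin (j-1) (by omega)
          rw [Nat.sub_add_cancel hn] at h8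
          have h10 : (0:ℤ) < 2^(e (j-1)) := by positivity
          have h11 := he1 (j-1) (by omega)
          have mono : ∀ i, i ≤ j + 1 → 0 ≤ Q i := by
            intro i
            induction i with
            | zero => intro _; omega
            | succ i ih =>
              intro hi
              have := he2 i (by omega)
              have h2 : (0:ℤ) < 2^(e i) := by positivity
              have := ih (by omega)
              omega
          have h12 := mono (j-1) (by omega)
          rw [ha] at h8
          have h13 := he2 j hj
          rw [ha, h3] at h13
          omega
        refine ⟨j, e j, hjn, ⟨b, by rw [ha]; ring⟩, he2 j hj, ?_⟩
        have h3 := he1 (j+1) (by omega)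
        rw [he2 j hj, ha] at h3
        have h4 : e (j+1) ≤ e j := hodd _ _ b (by convert h3 using 1; ring)
        have h5 := hmin (j+1) (by omega)
        have h6 : e (j+1) = e j := by omega
        have h7 := he2 (j+1) (by omega)
        rw [he2 j hj, h6] at h7
        rw [h7]; ring
      · -- odd: previous one
        have hj0 : 0 < j := by
          rcases Nat.eq_zero_or_pos j with rfl | h
          · rw [h0] at ha
            have : (2:ℤ)^(e 0) ≠ 0 := by positivity
            rcases mul_eq_zero.mp ha.symm with h | h
            · exact absurd h this
            · omega
          · exact h
        obtain ⟨i, rfl⟩ : ∃ i, j = i + 1 := ⟨j - 1, by omega⟩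
        have h3 := he2 i (by omega)
        have h4 : (2:ℤ)^(e i) ∣ Q (i+1) := by
          rw [h3]; exact dvd_add (he1 i (by omega)) dvd_rfl
        have h5 : e i ≤ e (i+1) := hodd _ _ b (by rw [← ha]; exact h4)
        have h6 := hmin i (by omega)
        have h7 : e i = e (i+1) := by omega
        have h8 := he2 (i+1) (by omega)
        rw [h7] at h3
        refine ⟨i, e (i+1), by omega, ⟨b, ?_⟩, h3, ?_⟩
        · have : Q i = Q (i+1) - 2^(e (i+1)) := by omega
          rw [this, ha]; ring
        · rw [h8, h3]; ring
    -- merge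
    set Q' : ℕ → ℤ := fun j => if j ≤ i then Q j else Q (j+1) with hQ'
    have hstd := ih Q' (by simp [hQ', h0]) (by
        intro j hj
        have : ¬ j ≤ i := by omega
        simp only [hQ', this, if_false]
        exact h1 _ (by omega)) (by
        intro j hj
        rcases lt_trichotomy j i with h | h | h
        · refine ⟨e j, ?_⟩
          have e1 : j ≤ i := h.le
          have e2 : j + 1 ≤ i := h
          simp only [hQ', e1, e2, if_true]
          exact ⟨he1 j (by omega), he2 j (by omega)⟩
        · subst h
          refine ⟨E+1, ?_⟩
          simp only [hQ', le_refl, if_true, Nat.not_succ_le_self, if_false]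
          exact ⟨hd, hs2⟩
        · refine ⟨e (j+1), ?_⟩
          have e1 : ¬ j ≤ i := by omega
          have e2 : ¬ j + 1 ≤ i := by omega
          simp only [hQ', e1, e2, if_false]
          exact ⟨he1 (j+1) (by omega), he2 (j+1) (by omega)⟩)
    have hstep := Std.step n _ i hstd hi
    convert hstep using 1
    funext j
    unfold ins
    rcases lt_trichotomy j (i+1) with h | h | h
    · have e1 : j ≤ i := by omega
      simp [hQ', e1]
    · subst h
      have e1 : ¬ i + 1 ≤ i := by omega
      simp only [hQ', e1, le_refl, if_true, if_false]
      rw [hs1, hs2]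
      push_cast
      ring
    · have e1 : ¬ j ≤ i := by omega
      have e2 : ¬ j = i + 1 := by omega
      have e3 : ¬ j - 1 ≤ i := by omega
      have e4 : j - 1 + 1 = j := by omega
      simp [hQ', e1, e2, e3, e4]

/-! ### Uniform dyadic form of piecewise linear maps -/

def Dy (f : ℝ ≃o ℝ) (N L K : ℕ) : Prop :=
  ∀ j : ℤ, ∃ k b : ℤ, |k| ≤ K ∧ ∀ t : ℝ, (j:ℝ) / 2^N ≤ t → t ≤ ((j:ℝ) + 1) / 2^N →
    f t = 2^k * t + (b:ℝ) / 2^L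

lemma fix_of_left {f : ℝ ≃o ℝ} {a : ℝ} (h : ∀ t, t < a → f t = t) : f a = a := by
  apply le_antisymm
  · have : a ≤ f.symm a := by
      apply le_of_forall_lt
      intro c hc
      have : f.symm c = c := by rw [OrderIso.symm_apply_eq, h c hc]
      rw [← this]
      exact f.symm.strictMono hc
    rwa [OrderIso.le_symm_apply] at this
  · apply le_of_forall_lt
    intro c hc
    rw [← h c hc]
    exact f.strictMono hc

lemma fix_of_right {f : ℝ ≃o ℝ} {a : ℝ} (h : ∀ t, a < t → f t = t) : f a = a := by
  apply le_antisymm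
  · apply le_of_forall_gt
    intro c hc
    rw [← h c hc]
    exact f.strictMono hc
  · have : f.symm a ≤ a := by
      apply le_of_forall_gt
      intro c hc
      have : f.symm c = c := by rw [OrderIso.symm_apply_eq, h c hc]
      rw [← this]
      exact f.symm.strictMono hc
    rwa [OrderIso.symm_apply_le] at this

lemma mem_closure_XX {f : ℝ ≃o ℝ} {N L K : ℕ} (hf : Dy f N L K)
    (hid : ∀ x, x ∉ Set.Icc (1/4:ℝ) (3/4) → f x = x) :
    f ∈ Subgroup.closure (Set.range XX) := by
  have f14 : f (1/4) = 1/4 := fix_of_left fun t ht => hid t (by simp only [Set.mem_Icc]; intro h; linarith [h.1])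
  have f34 : f (3/4) = 3/4 := fix_of_right fun t ht => hid t (by simp only [Set.mem_Icc]; intro h; linarith [h.2])
  have key : ∀ y : ℤ, ∃ (e : ℕ) (b : ℤ), e ≤ 2 * K ∧ ∀ t : ℝ, 0 ≤ t → t ≤ 1 →
      f (((y:ℝ) + t) / 2^(N+L+K+3)) = 2^e / 2^K * (((y:ℝ) + t) / 2^(N+L+K+3)) + (b:ℝ) / 2^L := by
    intro y
    obtain ⟨k, b, hk, hkb⟩ := hf (y / 2^(L+K+3))
    rw [abs_le] at hk
    obtain ⟨e, he⟩ : ∃ e : ℕ, k = (e:ℤ) - K := ⟨(k + K).toNat, by omega⟩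
    refine ⟨e, b, by omega, ?_⟩
    intro t h0 h1
    rw [hkb]
    · rw [he, zpow_sub₀ (by norm_num)]; simp
    · have h2 : (y / 2^(L+K+3)) * 2^(L+K+3) ≤ y := Int.ediv_mul_le _ (by positivity)
      have h3 : (((y / 2^(L+K+3) : ℤ) : ℝ)) * 2^(L+K+3) ≤ y := by exact_mod_cast h2
      rw [div_le_div_iff₀ (by positivity) (by positivity)]
      have h4 : (2:ℝ)^(N+L+K+3) = 2^N * 2^(L+K+3) := by rw [← pow_add]; congr 1; ring
      rw [h4]
      have h5 : (0:ℝ) < 2^N := by positivity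
      nlinarith
    · have h2 : y < (y / 2^(L+K+3) + 1) * 2^(L+K+3) := Int.lt_ediv_add_one_mul_self _ (by positivity)
      have h2' : y + 1 ≤ (y / 2^(L+K+3) + 1) * 2^(L+K+3) := h2
      have h3 : (y:ℝ) + 1 ≤ ((((y / 2^(L+K+3) : ℤ) : ℝ)) + 1) * 2^(L+K+3) := by exact_mod_cast h2'
      rw [div_le_div_iff₀ (by positivity) (by positivity)]
      have h4 : (2:ℝ)^(N+L+K+3) = 2^N * 2^(L+K+3) := by rw [← pow_add]; congr 1; ring
      rw [h4]
      have h5 : (0:ℝ) < 2^N := by positivity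
      nlinarith
  choose e b he hfe using key
  set m := N + L + K + 1 with hm
  -- integer partitions
  set y : ℕ → ℤ := fun j => 2^m + j with hy
  set Q : ℕ → ℤ := fun j => if j < 2^(m+1) then
      2^(e (y j)) * (y j) + b (y j) * 2^(N+2*K+3) - 2^(N+L+2*K+1) else 2^(N+L+2*K+2) with hQ
  set P : ℕ → ℤ := fun j => if j < 2^(m+1) then (j:ℤ) else 2^(m+1) with hP
  have hW : (2:ℝ)^(N+L+2*K+2) = 2^(m+1) * 2^K := by rw [← pow_add]; congr 1; omega
  have hW' : (2:ℝ)^(N+L+2*K+1) = 2^m * 2^K := by rw [← pow_add]; congr 1; omega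
  have hW2 : (2:ℝ)^(N+2*K+3) * 2^L = 2^(m+2) * 2^K := by rw [← pow_add, ← pow_add]; congr 1; omega
  have hm3 : (2:ℝ)^(N+L+K+3) = 2^(m+2) := rfl
  have hL : (0:ℝ) < 2^L := by positivity
  have hKp : (0:ℝ) < 2^K := by positivity
  have hmp : (0:ℝ) < 2^m := by positivity
  have hfQ : ∀ j, f (1/4 + ((P j : ℝ) / 2^(m+1)) / 2) = 1/4 + ((Q j : ℝ) / 2^(N+L+2*K+2)) / 2 := by
    intro j
    by_cases hj : j < 2^(m+1)
    · have h1 := hfe (y j) 0 le_rfl zero_le_one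
      rw [hm3] at h1
      simp only [hP, hQ, hj, if_true]
      have e1 : (1/4 + (((j:ℤ) : ℝ) / 2^(m+1)) / 2) = ((y j : ℝ) + 0) / 2^(m+2) := by
        simp only [hy]; push_cast; rw [pow_succ, pow_succ]; field_simp; ring
      rw [e1, h1]
      push_cast
      rw [hW, hW']
      have e2 : (2:ℝ)^(N+2*K+3) = 2^(m+2) * 2^K / 2^L := by rw [← hW2]; field_simp
      rw [e2, pow_succ, pow_succ]
      field_simp
      ring
    · simp only [hP, hQ, hj, if_false]
      push_cast
      rw [div_self (by positivity), div_self (by positivity)]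
      norm_num
      convert f34 using 2
  have hstep : ∀ j : ℕ, j < 2^(m+1) → ∀ t : ℝ, 0 ≤ t → t ≤ 1 →
      f (1/4 + (((j:ℝ) + t) / 2^(m+1)) / 2) = f (1/4 + ((j:ℝ) / 2^(m+1)) / 2) + t * (2^(e (y j)) / 2^(N+L+2*K+2)) / 2 := by
    intro j hj t h0 h1
    have e1 : ∀ t : ℝ, (1/4 + (((j:ℝ) + t) / 2^(m+1)) / 2) = ((y j : ℝ) + t) / 2^(m+2) := by
      intro t
      simp only [hy]; push_cast; rw [pow_succ, pow_succ]; field_simp; ring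
    have h2 := hfe (y j) t h0 h1
    have h3 := hfe (y j) 0 le_rfl zero_le_one
    rw [hm3] at h2 h3
    have e2 := e1 0
    rw [add_zero] at e2
    rw [e1, e2, h2, h3, hW]
    rw [pow_succ, pow_succ]
    field_simp
    ring
  have hPs : ∀ j, j < 2^(m+1) → P j = j ∧ P (j+1) = j + 1 := by
    intro j hj
    refine ⟨by simp [hP, hj], ?_⟩
    by_cases hj' : j + 1 < 2^(m+1)
    · simp [hP, hj']
    · simp only [hP, hj', if_false]
      have : j + 1 = 2^(m+1) := by omega
      exact_mod_cast this.symm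
  have hQs : ∀ j, j < 2^(m+1) → Q (j+1) = Q j + 2^(e (y j)) := by
    intro j hj
    have h1 := hstep j hj 1 zero_le_one le_rfl
    have h2 := hfQ j
    have h3 := hfQ (j+1)
    rw [(hPs j hj).1] at h2
    rw [(hPs j hj).2] at h3
    push_cast at h2 h3
    rw [h2, h3] at h1
    have h4 : (0:ℝ) < 2^(N+L+2*K+2) := by positivity
    field_simp at h1
    have : (Q (j+1) : ℝ) = Q j + 2^(e (y j)) := by linarith
    exact_mod_cast this
  have hQdvd : ∀ j, j < 2^(m+1) → (2:ℤ)^(e (y j)) ∣ Q j := by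
    intro j hj
    have h1 := he (y j)
    simp only [hQ, hj, if_true]
    refine dvd_sub (dvd_add (dvd_mul_right _ _) (Dvd.dvd.mul_left (pow_dvd_pow 2 (by omega)) _)) (pow_dvd_pow 2 (by omega))
  have hQ0 : Q 0 = 0 := by
    have h2 := hfQ 0
    have : P 0 = 0 := by simp [hP]
    rw [this] at h2
    simp only [Int.cast_zero, zero_div, add_zero] at h2
    rw [f14] at h2
    have h3 : (Q 0 : ℝ) / 2^(N+L+2*K+2) / 2 = 0 := by linarith
    have h4 : (0:ℝ) < 2^(N+L+2*K+2) := by positivity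
    field_simp at h3
    exact_mod_cast h3
  have sP := std_of_int (m+1) (2^(m+1)) P (by simp [hP]) (by
    intro j hj; simp [hP, not_lt.mpr hj]) (by
    intro j hj
    refine ⟨0, by simp, ?_⟩
    rw [(hPs j hj).1, (hPs j hj).2]; simp)
  have sQ := std_of_int (N+L+2*K+2) (2^(m+1)) Q hQ0 (by
    intro j hj; simp [hQ, not_lt.mpr hj]) (by
    intro j hj
    exact ⟨_, hQdvd j hj, hQs j hj⟩)
  refine mem_of_maps hid sP sQ ?_
  intro j t h0 h1
  simp only
  by_cases hj : j < 2^(m+1)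
  · have h2 := hstep j hj t h0 h1
    have h3 := hfQ j
    rw [hQs j hj, (hPs j hj).1, (hPs j hj).2]
    rw [(hPs j hj).1] at h3
    push_cast at h3 ⊢
    rw [h3] at h2
    have e1 : (1/4 + ((j:ℝ) / 2^(m+1) + t * (((j:ℝ) + 1) / 2^(m+1) - (j:ℝ) / 2^(m+1))) / 2)
        = (1/4 + (((j:ℝ) + t) / 2^(m+1)) / 2) := by ring
    rw [e1, h2]
    ring
  · have e1 : P (j+1) = P j := by
      have : ¬ j + 1 < 2^(m+1) := by omega
      simp [hP, hj, this]
    have e2 : Q (j+1) = Q j := by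
      have : ¬ j + 1 < 2^(m+1) := by omega
      simp [hQ, hj, this]
    rw [e1, e2, sub_self, sub_self, mul_zero, add_zero, add_zero]
    exact hfQ j

/-! ### Dyadic arithmetic -/

lemma IsDyadic.add {x y : ℝ} (hx : IsDyadic x) (hy : IsDyadic y) : IsDyadic (x + y) := by
  obtain ⟨a, b, rfl⟩ := hx
  obtain ⟨c, d, rfl⟩ := hy
  refine ⟨a * 2^d + c * 2^b, b + d, ?_⟩
  push_cast
  rw [pow_add]
  field_simp

lemma IsDyadic.neg {x : ℝ} (hx : IsDyadic x) : IsDyadic (-x) := by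
  obtain ⟨a, b, rfl⟩ := hx
  exact ⟨-a, b, by push_cast; ring⟩

lemma IsDyadic.sub {x y : ℝ} (hx : IsDyadic x) (hy : IsDyadic y) : IsDyadic (x - y) := by
  rw [sub_eq_add_neg]; exact hx.add hy.neg

lemma IsDyadic.mul {x y : ℝ} (hx : IsDyadic x) (hy : IsDyadic y) : IsDyadic (x * y) := by
  obtain ⟨a, b, rfl⟩ := hx
  obtain ⟨c, d, rfl⟩ := hy
  refine ⟨a * c, b + d, ?_⟩
  push_cast
  rw [pow_add]
  field_simp

lemma isDyadic_zpow (k : ℤ) : IsDyadic ((2:ℝ)^k) := by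
  rcases le_total 0 k with h | h
  · obtain ⟨n, rfl⟩ := Int.eq_ofNat_of_zero_le h
    exact ⟨2^n, 0, by simp⟩
  · obtain ⟨n, hn⟩ := Int.eq_ofNat_of_zero_le (neg_nonneg.mpr h)
    refine ⟨1, n, ?_⟩
    have : k = -(n:ℤ) := by omega
    rw [this]; simp

lemma isDyadic_int (a : ℤ) : IsDyadic (a:ℝ) := ⟨a, 0, by simp⟩

lemma isDyadic_div (a : ℤ) (n : ℕ) : IsDyadic ((a:ℝ) / 2^n) := ⟨a, n, rfl⟩

lemma IsDyadic.half {x : ℝ} (hx : IsDyadic x) : IsDyadic (x / 2) := by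
  obtain ⟨a, b, rfl⟩ := hx
  exact ⟨a, b + 1, by rw [pow_succ]; field_simp⟩

lemma exists_dyadic_between {x y : ℝ} (h : x < y) : ∃ d, IsDyadic d ∧ x < d ∧ d < y := by
  obtain ⟨n, hn⟩ := exists_pow_lt_of_lt_one (sub_pos.mpr h) (by norm_num : (1/2:ℝ) < 1)
  have hp : (0:ℝ) < 2^n := by positivity
  refine ⟨((⌊x * 2^n⌋ + 1 : ℤ) : ℝ) / 2^n, isDyadic_div _ _, ?_, ?_⟩
  · rw [lt_div_iff₀ hp]; push_cast; exact Int.lt_floor_add_one _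
  · rw [div_lt_iff₀ hp]; push_cast
    have h1 := Int.floor_le (x * 2^n)
    rw [one_div, inv_pow, inv_lt_iff_one_lt_mul₀ hp] at hn
    linarith

lemma common_denom {ι : Type} [Fintype ι] (x : ι → ℝ) (hx : ∀ i, IsDyadic (x i)) :
    ∃ N : ℕ, ∀ i, ∃ a : ℤ, x i = (a:ℝ) / 2^N := by
  choose a b hab using hx
  refine ⟨∑ i, b i, fun i => ?_⟩
  have : b i ≤ ∑ i, b i := Finset.single_le_sum (fun _ _ => Nat.zero_le _) (Finset.mem_univ i)
  obtain ⟨d, hd⟩ := Nat.exists_eq_add_of_le this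
  refine ⟨a i * 2^d, ?_⟩
  rw [hab i, hd, pow_add]
  push_cast
  field_simp

lemma thompson_fix_zero {f : ℝ ≃o ℝ} (hf : ∀ x : ℝ, x ∉ Set.Icc (0 : ℝ) 1 → f x = x) :
    (∀ t, t ≤ 0 → f t = t) ∧ (∀ t, 1 ≤ t → f t = t) := by
  have h0 : f 0 = 0 := fix_of_left fun t ht => hf t (by simp only [Set.mem_Icc]; intro h; linarith [h.1])
  have h1 : f 1 = 1 := fix_of_right fun t ht => hf t (by simp only [Set.mem_Icc]; intro h; linarith [h.2])
  constructor
  · intro t ht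
    rcases eq_or_lt_of_le ht with rfl | ht
    · exact h0
    · exact hf t (by simp only [Set.mem_Icc]; intro h; linarith [h.1])
  · intro t ht
    rcases eq_or_lt_of_le ht with rfl | ht
    · exact h1
    · exact hf t (by simp only [Set.mem_Icc]; intro h; linarith [h.2])

lemma dy_of_thompson {f : ℝ ≃o ℝ} (hf : InThompsonF f) : ∃ N L K, Dy f N L K := by
  obtain ⟨hid, m, x, x0, x1, hmono, hdy, hpc⟩ := hf
  obtain ⟨f0, f1⟩ := thompson_fix_zero hid
  choose k c hkc using hpc
  have hfx : ∀ i, IsDyadic (f (x i)) := by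
    intro i
    induction i using Fin.induction with
    | zero => rw [x0, f0 0 le_rfl]; exact ⟨0, 0, by simp⟩
    | succ i ih =>
      have hlt : x i.castSucc ≤ x i.succ := hmono.monotone (Fin.castSucc_lt_succ).le
      have h1 := hkc i _ (Set.left_mem_Icc.mpr hlt)
      have h2 := hkc i _ (Set.right_mem_Icc.mpr hlt)
      have : f (x i.succ) = f (x i.castSucc) + 2^(k i) * (x i.succ - x i.castSucc) := by
        rw [h1, h2]; ring
      rw [this]
      exact ih.add ((isDyadic_zpow _).mul ((hdy _).sub (hdy _)))
  have hc : ∀ i, IsDyadic (c i) := by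
    intro i
    have hlt : x i.castSucc ≤ x i.succ := hmono.monotone (Fin.castSucc_lt_succ).le
    have h1 := hkc i _ (Set.left_mem_Icc.mpr hlt)
    have : c i = f (x i.castSucc) - 2^(k i) * x i.castSucc := by rw [h1]; ring
    rw [this]
    exact (hfx _).sub ((isDyadic_zpow _).mul (hdy _))
  obtain ⟨N, hN⟩ := common_denom x hdy
  obtain ⟨L, hL⟩ := common_denom c hc
  choose a ha using hN
  choose b hb using hL
  refine ⟨N, L, ∑ i, (k i).natAbs, ?_⟩
  intro j
  have hp : (0:ℝ) < 2^N := by positivity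
  rcases lt_or_ge j 0 with hj | hj
  · refine ⟨0, 0, by simp only [abs_zero]; exact Int.natCast_nonneg _, ?_⟩
    intro t _ ht
    have h1 : ((j:ℝ) + 1) / 2^N ≤ 0 := by
      apply div_nonpos_of_nonpos_of_nonneg _ hp.le
      have : j + 1 ≤ 0 := hj
      exact_mod_cast this
    rw [f0 t (by linarith)]; simp
  rcases le_or_gt (2^N) j with hj' | hj'
  · refine ⟨0, 0, by simp only [abs_zero]; exact Int.natCast_nonneg _, ?_⟩
    intro t ht _
    have h1 : 1 ≤ (j:ℝ) / 2^N := by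
      rw [le_div_iff₀ hp, one_mul]; exact_mod_cast hj'
    rw [f1 t (by linarith)]; simp
  obtain ⟨i, hi1, hi2⟩ : ∃ i : Fin m, x i.castSucc ≤ (j:ℝ) / 2^N ∧ (j:ℝ) / 2^N < x i.succ := by
    by_contra hcon
    push Not at hcon
    have hall : ∀ i : Fin (m+1), x i ≤ (j:ℝ) / 2^N := by
      intro i
      induction i using Fin.induction with
      | zero => rw [x0]; have : (0:ℝ) ≤ j := by exact_mod_cast hj
                positivity
      | succ i ih => exact hcon i ih
    have h2 := hall (Fin.last m)
    rw [x1, le_div_iff₀ hp, one_mul] at h2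
    have h3 : (2:ℤ)^N ≤ j := by exact_mod_cast h2
    omega
  refine ⟨k i, b i, ?_, ?_⟩
  · rw [Int.abs_eq_natAbs]
    exact_mod_cast Finset.single_le_sum (f := fun i => (k i).natAbs) (fun _ _ => Nat.zero_le _) (Finset.mem_univ i)
  · intro t h1 h2
    rw [← hb i]
    apply hkc
    refine ⟨hi1.trans h1, h2.trans ?_⟩
    rw [ha, div_lt_div_iff_of_pos_right hp] at hi2
    rw [ha, div_le_div_iff_of_pos_right hp]
    have h3 : j < a i.succ := by exact_mod_cast hi2
    have h4 : j + 1 ≤ a i.succ := h3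
    exact_mod_cast h4

lemma thompson_of_pieces {f : ℝ ≃o ℝ} (hid : ∀ x : ℝ, x ∉ Set.Icc (0 : ℝ) 1 → f x = x) (N : ℕ)
    (h : ∀ j : ℤ, ∃ (k : ℤ) (c : ℝ), ∀ t ∈ Set.Icc ((j:ℝ)/2^N) (((j:ℝ)+1)/2^N), f t = 2^k * t + c) :
    InThompsonF f := by
  have hp : (0:ℝ) < 2^N := by positivity
  refine ⟨hid, 2^N, fun i => ((i : ℕ) : ℝ) / 2^N, by simp, by simp, ?_, ?_, ?_⟩
  · intro i j hij
    simp only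
    gcongr
    exact hij
  · intro i
    exact ⟨(i:ℕ), N, by simp⟩
  · intro i
    obtain ⟨k, c, hkc⟩ := h (i:ℕ)
    refine ⟨k, c, fun t ht => hkc t ?_⟩
    simpa using ht

lemma rot_thompson {a s : ℝ} (ha : IsDyadic a) (hs : IsDyadic s) (ha0 : 0 ≤ a) (hs0 : 0 ≤ s)
    (h1 : a + 4 * s ≤ 1) : InThompsonF (rot a s) := by
  obtain ⟨N, hN⟩ := common_denom ![a, s] (by intro i; fin_cases i <;> simpa)
  obtain ⟨α, hα⟩ := hN 0
  obtain ⟨σ, hσ⟩ := hN 1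
  simp only [Matrix.cons_val_zero, Matrix.cons_val_one] at hα hσ
  have hp : (0:ℝ) < 2^N := by positivity
  refine thompson_of_pieces ?_ N ?_
  · intro x hx
    simp only [Set.mem_Icc, not_and_or, not_le] at hx
    rcases hx with hx | hx
    · exact rot_left (by linarith)
    · exact rot_right (by linarith)
  · intro j
    have cmp : ∀ z : ℤ, (z ≤ j → (z:ℝ)/2^N ≤ (j:ℝ)/2^N) ∧ (j < z → ((j:ℝ)+1)/2^N ≤ (z:ℝ)/2^N) := by
      intro z
      constructor
      · intro h
        rw [div_le_div_iff_of_pos_right hp]; exact_mod_cast h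
      · intro h
        rw [div_le_div_iff_of_pos_right hp]
        have h' : j + 1 ≤ z := h
        exact_mod_cast h'
    have c1 : ((α + σ : ℤ) : ℝ)/2^N = a + s := by rw [hα, hσ]; push_cast; ring
    have c2 : ((α + 2 * σ : ℤ) : ℝ)/2^N = a + 2 * s := by rw [hα, hσ]; push_cast; ring
    have c4 : ((α + 4 * σ : ℤ) : ℝ)/2^N = a + 4 * s := by rw [hα, hσ]; push_cast; ring
    have k0 := cmp α
    have k1 := cmp (α + σ)
    have k2 := cmp (α + 2 * σ)
    have k4 := cmp (α + 4 * σ)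
    rw [← hα] at k0
    rw [c1] at k1
    rw [c2] at k2
    rw [c4] at k4
    rcases lt_or_ge j α with h | h
    · refine ⟨0, 0, fun t ht => ?_⟩
      rw [rot_left (ht.2.trans (k0.2 h))]; simp
    rcases lt_or_ge j (α + σ) with h' | h'
    · refine ⟨1, -a, fun t ht => ?_⟩
      rw [rot_one ((k0.1 h).trans ht.1) (ht.2.trans (k1.2 h')), zpow_one]; ring
    rcases lt_or_ge j (α + 2 * σ) with h'' | h''
    · refine ⟨0, s, fun t ht => ?_⟩
      rw [rot_two hs0 ((k1.1 h').trans ht.1) (ht.2.trans (k2.2 h''))]; simp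
    rcases lt_or_ge j (α + 4 * σ) with h4 | h4
    · refine ⟨-1, (a + 4 * s)/2, fun t ht => ?_⟩
      rw [rot_three hs0 ((k2.1 h'').trans ht.1) (ht.2.trans (k4.2 h4)), zpow_neg_one]; ring
    · refine ⟨0, 0, fun t ht => ?_⟩
      rw [rot_right ((k4.1 h4).trans ht.1)]; simp

/-! ### Germs at the end points -/

def Germ (f : ℝ ≃o ℝ) (k l : ℤ) : Prop :=
  ∃ ε : ℝ, 0 < ε ∧ (∀ t, 0 ≤ t → t ≤ ε → f t = 2^k * t) ∧
    (∀ t, 1 - ε ≤ t → t ≤ 1 → f t = 1 + 2^l * (t - 1))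

lemma Germ.mul {f g : ℝ ≃o ℝ} {k l k' l' : ℤ} (hf : Germ f k l) (hg : Germ g k' l') :
    Germ (f * g) (k + k') (l + l') := by
  obtain ⟨ε, he, h0, h1⟩ := hf
  obtain ⟨δ, hd, g0, g1⟩ := hg
  have p1 : (0:ℝ) < 2^k' := by positivity
  have p2 : (0:ℝ) < 2^l' := by positivity
  refine ⟨min δ (min (ε / 2^k') (ε / 2^l')), by positivity, ?_, ?_⟩
  · intro t ht ht'
    simp only [le_min_iff] at ht'
    rw [RelIso.mul_apply, g0 t ht ht'.1, h0, zpow_add₀ (by norm_num)]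
    · ring
    · positivity
    · have := ht'.2.1; rw [le_div_iff₀ p1] at this; linarith
  · intro t ht ht'
    have ht2 : 1 - t ≤ min δ (min (ε / 2^k') (ε / 2^l')) := by linarith
    simp only [le_min_iff] at ht2
    have := ht2.2.2
    rw [le_div_iff₀ p2] at this
    rw [RelIso.mul_apply, g1 t (by linarith) ht', h1, zpow_add₀ (by norm_num)]
    · ring
    · linarith
    · nlinarith

lemma Germ.inv {f : ℝ ≃o ℝ} {k l : ℤ} (hf : Germ f k l) : Germ f⁻¹ (-k) (-l) := by
  obtain ⟨ε, he, h0, h1⟩ := hf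
  have p1 : (0:ℝ) < 2^k := by positivity
  have p2 : (0:ℝ) < 2^l := by positivity
  refine ⟨min (ε * 2^k) (ε * 2^l), by positivity, ?_, ?_⟩
  · intro t ht ht'
    simp only [le_min_iff] at ht'
    have : f (2^(-k) * t) = t := by
      rw [h0, zpow_neg]
      · field_simp
      · positivity
      · rw [zpow_neg, inv_mul_le_iff₀ p1]; linarith
    conv_lhs => rw [← this]
    rw [RelIso.inv_apply_self]
  · intro t ht ht'
    have ht2 : 1 - t ≤ min (ε * 2^k) (ε * 2^l) := by linarith
    simp only [le_min_iff] at ht2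
    have hq : 2^(-l) * (1 - t) ≤ ε := by
      rw [zpow_neg, inv_mul_le_iff₀ p2]; linarith
    have hq0 : (0:ℝ) ≤ 2^(-l) * (1 - t) := mul_nonneg (by positivity) (by linarith)
    have : f (1 + 2^(-l) * (t - 1)) = t := by
      rw [h1, zpow_neg]
      · field_simp; ring
      · linarith
      · linarith
    conv_lhs => rw [← this]
    rw [RelIso.inv_apply_self]

lemma germ_of_thompson {f : ℝ ≃o ℝ} (hf : InThompsonF f) : ∃ k l, Germ f k l := by
  obtain ⟨N, L, K, h⟩ := dy_of_thompson hf
  obtain ⟨f0, f1⟩ := thompson_fix_zero hf.1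
  have hp : (0:ℝ) < 2^N := by positivity
  obtain ⟨k, b, -, hk⟩ := h 0
  obtain ⟨l, c, -, hl⟩ := h (2^N - 1)
  push_cast at hk hl
  have e : ((2:ℝ)^N - 1) / 2^N = 1 - 1 / 2^N := by field_simp
  have e' : ((2:ℝ)^N - 1 + 1) / 2^N = 1 := by field_simp; ring
  rw [e, e'] at hl
  have hp1 : (0:ℝ) < 1 / 2^N := by positivity
  refine ⟨k, l, 1 / 2^N, hp1, ?_, ?_⟩
  · intro t h0 h1
    have hz := hk 0 (by simp) (by positivity)
    rw [f0 0 le_rfl] at hz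
    rw [hk t (by simpa using h0) (by simpa using h1)]
    linarith
  · intro t h0 h1
    have hz := hl 1 (by linarith) le_rfl
    rw [f1 1 le_rfl] at hz
    rw [hl t h0 h1]
    linarith

/-! ### The group of compactly supported elements -/

def FcSub (F : Subgroup (ℝ ≃o ℝ)) : Subgroup (ℝ ≃o ℝ) where
  carrier := {f | f ∈ F ∧ ∃ ε : ℝ, 0 < ε ∧ ∀ t, t ≤ ε ∨ 1 - ε ≤ t → f t = t}
  one_mem' := ⟨F.one_mem, 1, one_pos, fun _ _ => rfl⟩
  mul_mem' := by
    rintro f g ⟨hf, ε, he, h⟩ ⟨hg, δ, hd, h'⟩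
    refine ⟨F.mul_mem hf hg, min ε δ, by positivity, ?_⟩
    intro t ht
    have h1 := min_le_left ε δ
    have h2 := min_le_right ε δ
    rw [RelIso.mul_apply, h', h]
    · rcases ht with ht | ht
      · left; linarith
      · right; linarith
    · rcases ht with ht | ht
      · left; linarith
      · right; linarith
  inv_mem' := by
    rintro f ⟨hf, ε, he, h⟩
    refine ⟨F.inv_mem hf, ε, he, ?_⟩
    intro t ht
    conv_lhs => rw [← h t ht]
    rw [RelIso.inv_apply_self]

lemma inv_apply_eq_of {f : ℝ ≃o ℝ} {x y : ℝ} (h : f x = y) : f⁻¹ y = x := by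
  rw [← h, RelIso.inv_apply_self]

lemma push_up {f : ℝ ≃o ℝ} {a b x y : ℝ} (h : ∀ t, a < t → t < b → t < f t)
    (hx : a < x) (hy : y < b) : ∃ n : ℕ, y < (f^n) x := by
  by_contra hcon
  push Not at hcon
  have hbd : BddAbove (Set.range fun n : ℕ => (f^n) x) := ⟨y, by rintro _ ⟨n, rfl⟩; exact hcon n⟩
  set S := ⨆ n : ℕ, (f^n) x with hS
  have h1 : S ≤ y := ciSup_le hcon
  have h2 : x ≤ S := le_ciSup hbd 0
  have h3 := h S (by linarith) (by linarith)
  have h4 : f⁻¹ S < S := by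
    apply f.lt_iff_lt.mp
    rwa [RelIso.apply_inv_self]
  obtain ⟨n, hn⟩ := exists_lt_of_lt_ciSup h4
  have h5 := f.strictMono hn
  rw [RelIso.apply_inv_self, ← RelIso.mul_apply, ← pow_succ'] at h5
  exact absurd (le_ciSup hbd (n+1)) (not_le.mpr h5)

lemma push_down {f : ℝ ≃o ℝ} {a b x y : ℝ} (h : ∀ t, a < t → t < b → f t < t)
    (hx : x < b) (hy : a < y) : ∃ n : ℕ, (f^n) x < y := by
  by_contra hcon
  push Not at hcon
  have hbd : BddBelow (Set.range fun n : ℕ => (f^n) x) := ⟨y, by rintro _ ⟨n, rfl⟩; exact hcon n⟩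
  set S := ⨅ n : ℕ, (f^n) x with hS
  have h1 : y ≤ S := le_ciInf hcon
  have h2 : S ≤ x := ciInf_le hbd 0
  have h3 := h S (by linarith) (by linarith)
  have h4 : S < f⁻¹ S := by
    apply f.lt_iff_lt.mp
    rwa [RelIso.apply_inv_self]
  obtain ⟨n, hn⟩ := exists_lt_of_ciInf_lt h4
  have h5 := f.strictMono hn
  rw [RelIso.apply_inv_self, ← RelIso.mul_apply, ← pow_succ'] at h5
  exact absurd (ciInf_le hbd (n+1)) (not_le.mpr h5)

lemma pow_fix {f : ℝ ≃o ℝ} {x : ℝ} (h : f x = x) (n : ℕ) : (f^n) x = x := by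
  induction n with
  | zero => rfl
  | succ n ih => rw [pow_succ, RelIso.mul_apply, h, ih]

open scoped commutatorElement

lemma rot_mem_Fc {F : Subgroup (ℝ ≃o ℝ)}
    (hF : ∀ f : ℝ ≃o ℝ, f ∈ F ↔ InThompsonF f) {a s : ℝ} (ha : IsDyadic a) (hs : IsDyadic s) (ha0 : 0 < a) (hs0 : 0 ≤ s)
    (h1 : a + 4 * s < 1) : rot a s ∈ FcSub F := by
  refine ⟨(hF _).mpr (rot_thompson ha hs ha0.le hs0 h1.le), min a (1 - (a + 4 * s)), ?_, ?_⟩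
  · rw [lt_min_iff]; constructor <;> linarith
  · have h2 := min_le_left a (1 - (a + 4 * s))
    have h3 := min_le_right a (1 - (a + 4 * s))
    rintro t (ht | ht)
    · exact rot_left (by linarith)
    · exact rot_right (by linarith)

lemma shrink {F : Subgroup (ℝ ≃o ℝ)}
    (hF : ∀ f : ℝ ≃o ℝ, f ∈ F ↔ InThompsonF f) {ε p q : ℝ} (hε : 0 < ε) (hε1 : ε < 1) (hp : 0 < p) (hpq : p < q) (hq : q < 1) :
    ∃ k ∈ FcSub F, ∀ t, ε < t → t < 1 - ε → p < k t ∧ k t < q := by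
  obtain ⟨p', dp', hp1, hp2⟩ := exists_dyadic_between hpq
  obtain ⟨r', dr', hr1, hr2⟩ := exists_dyadic_between (show (0:ℝ) < min ε p by positivity)
  obtain ⟨r, dr, hr3, hr4⟩ := exists_dyadic_between (show max (1 - ε) p' < 1 by
    rw [max_lt_iff]; constructor <;> linarith)
  rw [lt_min_iff] at hr2
  rw [max_lt_iff] at hr3
  have e1 : r' + 4 * ((r - r') / 2 / 2) = r := by ring
  have e2 : p' + 4 * ((r - p') / 2 / 2) = r := by ring
  have m1 : rot r' ((r - r') / 2 / 2) ∈ FcSub F :=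
    rot_mem_Fc hF dr' (dr.sub dr').half.half hr1 (by linarith) (by rw [e1]; exact hr4)
  have m2 : rot p' ((r - p') / 2 / 2) ∈ FcSub F :=
    rot_mem_Fc hF dp' (dr.sub dp').half.half (by linarith) (by linarith) (by rw [e2]; exact hr4)
  obtain ⟨n, hn⟩ := push_up (f := rot r' ((r - r') / 2 / 2)) (a := r') (b := r) (x := ε) (y := p')
    (fun t h1 h2 => rot_lt h1 (by rw [e1]; exact h2)) hr2.1 hr3.2
  set g := (rot r' ((r - r') / 2 / 2))^n with hg
  have gr : g r = r := pow_fix (rot_right e1.le) n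
  have hg1 : g (1 - ε) < r := by
    conv_rhs => rw [← gr]
    exact g.strictMono hr3.1
  obtain ⟨m, hm⟩ := push_down (f := (rot p' ((r - p') / 2 / 2))⁻¹) (a := p') (b := r)
    (x := g (1 - ε)) (y := q) (fun t h1 h2 => by
      apply (rot p' ((r - p') / 2 / 2)).lt_iff_lt.mp
      rw [RelIso.apply_inv_self]
      exact rot_lt h1 (by rw [e2]; exact h2)) hg1 hp2
  set h := ((rot p' ((r - p') / 2 / 2))⁻¹)^m with hh
  have hp' : h p' = p' := pow_fix (inv_apply_eq_of (rot_left le_rfl)) m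
  refine ⟨h * g, Subgroup.mul_mem _ (Subgroup.pow_mem _ (Subgroup.inv_mem _ m2) _)
    (Subgroup.pow_mem _ m1 _), ?_⟩
  intro t ht ht'
  rw [RelIso.mul_apply]
  constructor
  · have h1 : p' < g t := hn.trans (g.strictMono ht)
    have h2 := h.strictMono h1
    rw [hp'] at h2
    linarith
  · exact (h.strictMono (g.strictMono ht')).trans hm

lemma conj_mem_comm {F : Subgroup (ℝ ≃o ℝ)} {k d : ℝ ≃o ℝ} (hk : k ∈ FcSub F) (hd : d ∈ ⁅FcSub F, FcSub F⁆) :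
    k * d * k⁻¹ ∈ ⁅FcSub F, FcSub F⁆ := by
  have h1 : d ∈ FcSub F := Subgroup.commutator_le_self _ hd
  have h2 := Subgroup.commutator_mem_commutator hk h1
  have : k * d * k⁻¹ = ⁅k, d⁆ * d := by rw [commutatorElement_def]; group
  rw [this]
  exact Subgroup.mul_mem _ h2 hd

lemma rot_mem_comm_small {F : Subgroup (ℝ ≃o ℝ)}
    (hF : ∀ f : ℝ ≃o ℝ, f ∈ F ↔ InThompsonF f) {a s : ℝ} (ha : IsDyadic a) (hs : IsDyadic s) (ha0 : 0 < a - 4 * s)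
    (hs0 : 0 < s) (h1 : a + 8 * s < 1) : rot a s ∈ ⁅FcSub F, FcSub F⁆ := by
  have d2 : IsDyadic (2 * s) := by simpa using (isDyadic_int 2).mul hs
  have d4 : IsDyadic (4 * s) := by simpa using (isDyadic_int 4).mul hs
  set x := rot a s with hx
  have mx : x ∈ FcSub F := rot_mem_Fc hF ha hs (by linarith) hs0.le (by linarith)
  set k1 := (rot a (2 * s))⁻¹ with hk1
  have m1 : k1 ∈ FcSub F :=
    Subgroup.inv_mem _ (rot_mem_Fc hF ha d2 (by linarith) (by linarith) (by linarith))
  set k2 := rot (a - 4 * s) (2 * s) with hk2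
  have m2 : k2 ∈ FcSub F :=
    rot_mem_Fc hF (ha.sub d4) d2 (by linarith) (by linarith) (by linarith)
  have c1 : k1 * x * k1⁻¹ = rot a (1 / 2 * s) := by
    apply rot_conj hs0.le (by norm_num)
    intro t h h'
    apply inv_apply_eq_of
    rw [rot_one (by linarith) (by linarith)]
    ring
  have c2 : k2 * x * k2⁻¹ = rot (a + 2 * s) (1 / 2 * s) := by
    apply rot_conj hs0.le (by norm_num)
    intro t h h'
    rw [hk2, rot_three (by linarith) (by linarith) (by linarith)]
    ring
  have pent := rot_pentagon (a := a) hs0.le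
  have e : s / 2 = 1 / 2 * s := by ring
  rw [e, ← c1, ← c2, ← hx] at pent
  have q1 := Subgroup.commutator_mem_commutator m1 mx
  have q2 := Subgroup.commutator_mem_commutator m2 mx
  have q3 := conj_mem_comm (Subgroup.inv_mem _ (Subgroup.mul_mem _ mx mx)) q2
  have fin : x⁻¹ = (x * x)⁻¹ * ⁅k2, x⁆ * (x * x)⁻¹⁻¹ * ⁅k1, x⁆ := by
    have : (x * x)⁻¹ * ⁅k2, x⁆ * (x * x)⁻¹⁻¹ * ⁅k1, x⁆
        = (x * x)⁻¹ * (k2 * x * k2⁻¹ * x * (k1 * x * k1⁻¹)) * x⁻¹ := by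
      simp only [commutatorElement_def]; group
    rw [this, ← pent]; group
  have : x⁻¹ ∈ ⁅FcSub F, FcSub F⁆ := by
    rw [fin]; exact Subgroup.mul_mem _ q3 q1
  exact (Subgroup.inv_mem_iff _).mp this

lemma rot_mem_comm {F : Subgroup (ℝ ≃o ℝ)}
    (hF : ∀ f : ℝ ≃o ℝ, f ∈ F ↔ InThompsonF f) (n : ℕ) : ∀ {a s : ℝ}, IsDyadic a → IsDyadic s → 0 < s →
    8 * s < 2^n * a → 8 * s < 2^n * (1 - (a + 4 * s)) → rot a s ∈ ⁅FcSub F, FcSub F⁆ := by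
  induction n with
  | zero =>
    intro a s ha hs hs0 h1 h2
    apply rot_mem_comm_small hF ha hs _ hs0 <;> linarith
  | succ n ih =>
    intro a s ha hs hs0 h1 h2
    have hp : (0:ℝ) < 2^n := by positivity
    rw [pow_succ] at h1 h2
    have d2 : IsDyadic (2 * s) := by simpa using (isDyadic_int 2).mul hs
    have hz : rot (a + 2 * s) (s / 2) ∈ ⁅FcSub F, FcSub F⁆ := by
      apply ih (ha.add d2) hs.half (by linarith) <;> nlinarith
    have hy : rot a (s / 2) ∈ ⁅FcSub F, FcSub F⁆ := by
      apply ih ha hs.half (by linarith) <;> nlinarith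
    have a0 : 0 < a := by
      by_contra hcon
      nlinarith
    have a1 : a + 4 * s < 1 := by
      by_contra hcon
      nlinarith
    have hx : rot a s ∈ FcSub F := rot_mem_Fc hF ha hs a0 hs0.le a1
    have pent := rot_pentagon (a := a) hs0.le
    have hc := conj_mem_comm (Subgroup.inv_mem _ hx) hz
    have : rot a s = (rot a s)⁻¹ * rot (a + 2 * s) (s / 2) * (rot a s)⁻¹⁻¹ * rot a (s / 2) := by
      have h3 : (rot a s)⁻¹ * rot (a + 2 * s) (s / 2) * (rot a s)⁻¹⁻¹ * rot a (s / 2)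
        = (rot a s)⁻¹ * (rot (a + 2 * s) (s / 2) * rot a s * rot a (s / 2)) := by group
      rw [h3, ← pent]; group
    rw [this]
    exact Subgroup.mul_mem _ hc hy

lemma dyadic_half_pow (i : ℕ) : IsDyadic ((1/2:ℝ)^i) := ⟨1, i, by simp⟩

lemma XX_mem_comm {F : Subgroup (ℝ ≃o ℝ)}
    (hF : ∀ f : ℝ ≃o ℝ, f ∈ F ↔ InThompsonF f) (i : ℕ) : XX i ∈ ⁅FcSub F, FcSub F⁆ := by
  have h1 : (1/2:ℝ)^i ≤ 1 := pow_le_one₀ (by norm_num) (by norm_num)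
  have h0 : (0:ℝ) < (1/2)^i := by positivity
  have d34 : IsDyadic (3/4:ℝ) := ⟨3, 2, by norm_num⟩
  have e : (1/2:ℝ)^i / 8 = (1/2)^i / 2 / 2 / 2 := by ring
  apply rot_mem_comm hF 3
  · exact d34.sub (dyadic_half_pow i).half
  · rw [e]; exact (dyadic_half_pow i).half.half.half
  · positivity
  · linarith
  · linarith

lemma Fc_small_mem {F : Subgroup (ℝ ≃o ℝ)}
    (hF : ∀ f : ℝ ≃o ℝ, f ∈ F ↔ InThompsonF f) {f : ℝ ≃o ℝ} (hf : f ∈ F)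
    (hid : ∀ x, x ∉ Set.Icc (1/4:ℝ) (3/4) → f x = x) :
    f ∈ Subgroup.closure (Set.range XX) := by
  obtain ⟨N, L, K, h⟩ := dy_of_thompson ((hF f).mp hf)
  exact mem_closure_XX h hid

lemma Fc_supp {F : Subgroup (ℝ ≃o ℝ)} {f : ℝ ≃o ℝ} (hf : f ∈ FcSub F) : ∃ ε : ℝ, 0 < ε ∧ ε < 1 ∧
    ∀ t, t ≤ ε ∨ 1 - ε ≤ t → f t = t := by
  obtain ⟨_, ε, he, h⟩ := hf
  refine ⟨min ε (1/2), by positivity, (min_le_right _ _).trans_lt (by norm_num), ?_⟩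
  have h2 := min_le_left ε (1/2)
  rintro t (ht | ht)
  · exact h t (Or.inl (by linarith))
  · exact h t (Or.inr (by linarith))

lemma Fc_conj_supp {f k : ℝ ≃o ℝ} {ε p q : ℝ} (h : ∀ t, t ≤ ε ∨ 1 - ε ≤ t → f t = t)
    (hk : ∀ t, ε < t → t < 1 - ε → p < k t ∧ k t < q) (x : ℝ) (hx : x ≤ p ∨ q ≤ x) :
    (k * f * k⁻¹) x = x := by
  rw [RelIso.mul_apply, RelIso.mul_apply, h, RelIso.apply_inv_self]
  by_contra hcon
  push Not at hcon
  have := hk _ hcon.1 hcon.2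
  rw [RelIso.apply_inv_self] at this
  rcases hx with hx | hx <;> linarith [this.1, this.2]

lemma Fc_perfect {F : Subgroup (ℝ ≃o ℝ)}
    (hF : ∀ f : ℝ ≃o ℝ, f ∈ F ↔ InThompsonF f) : FcSub F ≤ ⁅FcSub F, FcSub F⁆ := by
  intro f hf
  obtain ⟨ε, he, he1, h⟩ := Fc_supp hf
  obtain ⟨k, hk, hks⟩ := shrink hF he he1 (p := 1/4) (q := 3/4) (by norm_num) (by norm_num) (by norm_num)
  have hmem : k * f * k⁻¹ ∈ FcSub F := Subgroup.mul_mem _ (Subgroup.mul_mem _ hk hf) (Subgroup.inv_mem _ hk)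
  have h1 : k * f * k⁻¹ ∈ Subgroup.closure (Set.range XX) := by
    apply Fc_small_mem hF hmem.1
    intro x hx
    apply Fc_conj_supp h hks
    simp only [Set.mem_Icc, not_and_or, not_le] at hx
    exact hx.imp le_of_lt le_of_lt
  have h2 : Subgroup.closure (Set.range XX) ≤ ⁅FcSub F, FcSub F⁆ := by
    rw [Subgroup.closure_le]
    rintro _ ⟨i, rfl⟩
    exact XX_mem_comm hF i
  have h3 := conj_mem_comm (Subgroup.inv_mem _ hk) (h2 h1)
  convert h3 using 1
  group

lemma Fc_fix {F : Subgroup (ℝ ≃o ℝ)}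
    (hF : ∀ f : ℝ ≃o ℝ, f ∈ F ↔ InThompsonF f) {f : ℝ ≃o ℝ} (hf : f ∈ F) : (∀ t, t ≤ 0 → f t = t) ∧ (∀ t, 1 ≤ t → f t = t) :=
  thompson_fix_zero ((hF f).mp hf).1

lemma Fc_simple {F : Subgroup (ℝ ≃o ℝ)}
    (hF : ∀ f : ℝ ≃o ℝ, f ∈ F ↔ InThompsonF f) (N : Subgroup (ℝ ≃o ℝ)) (hN : N ≤ FcSub F)
    (hconj : ∀ k ∈ FcSub F, ∀ g ∈ N, k * g * k⁻¹ ∈ N) (hne : N ≠ ⊥) : FcSub F ≤ N := by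
  obtain ⟨⟨g, hg⟩, hg0⟩ := Subgroup.ne_bot_iff_exists_ne_one.mp hne
  have hg1 : g ≠ 1 := fun e => hg0 (Subtype.ext e)
  have hgF := hN hg
  obtain ⟨x, hx⟩ : ∃ x, g x ≠ x := by
    by_contra hcon
    push Not at hcon
    exact hg1 (by ext x; exact hcon x)
  obtain ⟨f0, f1⟩ := Fc_fix hF hgF.1
  have x0 : 0 < x := by
    by_contra hcon; exact hx (f0 x (not_lt.mp hcon))
  have x1 : x < 1 := by
    by_contra hcon; exact hx (f1 x (not_lt.mp hcon))
  have g0 : 0 < g x := by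
    have := g.strictMono x0; rwa [f0 0 le_rfl] at this
  have g1 : g x < 1 := by
    have := g.strictMono x1; rwa [f1 1 le_rfl] at this
  obtain ⟨p, q, hp, hpq, hq, hdisj⟩ : ∃ p q : ℝ, 0 < p ∧ p < q ∧ q < 1 ∧
      ∀ t, p < t → t < q → g t ≤ p ∨ q ≤ g t := by
    rcases lt_or_gt_of_ne hx with h | h
    · refine ⟨g x, x, g0, h, x1, ?_⟩
      intro t _ ht
      exact Or.inl (g.strictMono ht).le
    · refine ⟨x, g x, x0, h, g1, ?_⟩
      intro t ht _
      exact Or.inr (g.strictMono ht).le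
  -- commutators of elements supported in `(p,q)`
  have hloc : ∀ f ∈ FcSub F, ∀ h ∈ FcSub F, (∀ x, x ≤ p ∨ q ≤ x → f x = x) →
      (∀ x, x ≤ p ∨ q ≤ x → h x = x) → ⁅f, h⁆ ∈ N := by
    intro f hf h hh sf sh
    obtain ⟨f', hf'⟩ : ∃ f' : ℝ ≃o ℝ, f' = g * f⁻¹ * g⁻¹ := ⟨_, rfl⟩
    have hcomm : f' * h = h * f' := by
      have sfi : ∀ x, x ≤ p ∨ q ≤ x → f⁻¹ x = x := fun x hx => inv_apply_eq_of (sf x hx)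
      have s' : ∀ x, p < x → x < q → f' x = x := by
        intro x h1 h2
        rw [hf', RelIso.mul_apply, RelIso.mul_apply, sfi, RelIso.apply_inv_self]
        by_contra hcon
        push Not at hcon
        have := hdisj _ hcon.1 hcon.2
        rw [RelIso.apply_inv_self] at this
        rcases this with h | h <;> linarith
      ext x
      rw [RelIso.mul_apply, RelIso.mul_apply]
      by_cases hxx : p < x ∧ x < q
      · have h3 : p < h x := by
          have := h.strictMono hxx.1; rwa [sh p (Or.inl le_rfl)] at this
        have h4 : h x < q := by
          have := h.strictMono hxx.2; rwa [sh q (Or.inr le_rfl)] at this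
        rw [s' _ h3 h4, s' x hxx.1 hxx.2]
      · have hxx' : x ≤ p ∨ q ≤ x := by
          by_contra hcon; push Not at hcon; exact hxx hcon
        have h5 : f' x ≤ p ∨ q ≤ f' x := by
          by_contra hcon
          push Not at hcon
          have h6 := s' _ hcon.1 hcon.2
          have h7 := f'.injective h6
          rw [h7] at hcon
          exact hxx hcon
        rw [sh x hxx', sh _ h5]
    have hN1 : f * f' ∈ N := by
      have h1 := hconj f hf g hg
      have h2 := N.mul_mem h1 (N.inv_mem hg)
      convert h2 using 1
      rw [hf']; group
    have hN2 := hconj h hh _ (N.inv_mem hN1)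
    have hN3 := N.mul_mem hN1 hN2
    convert hN3 using 1
    have e1 : f * f' * (h * (f * f')⁻¹ * h⁻¹) = f * (f' * h) * f'⁻¹ * f⁻¹ * h⁻¹ := by group
    rw [e1, hcomm, commutatorElement_def]
    group
  refine (Fc_perfect hF).trans ?_
  rw [Subgroup.commutator_le]
  intro f hf h hh
  obtain ⟨ε, he, he1, sf⟩ := Fc_supp hf
  obtain ⟨δ, hd, hd1, sh⟩ := Fc_supp hh
  obtain ⟨k, hk, hks⟩ := shrink hF (ε := min ε δ) (by positivity) ((min_le_left _ _).trans_lt he1) hp hpq hq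
  have l1 := min_le_left ε δ
  have l2 := min_le_right ε δ
  have mf : k * f * k⁻¹ ∈ FcSub F := Subgroup.mul_mem _ (Subgroup.mul_mem _ hk hf) (Subgroup.inv_mem _ hk)
  have mh : k * h * k⁻¹ ∈ FcSub F := Subgroup.mul_mem _ (Subgroup.mul_mem _ hk hh) (Subgroup.inv_mem _ hk)
  have h1 := hloc _ mf _ mh (Fc_conj_supp (fun t ht => sf t
      (ht.imp (fun h => by linarith) (fun h => by linarith))) hks)
    (Fc_conj_supp (fun t ht => sh t
      (ht.imp (fun h => by linarith) (fun h => by linarith))) hks)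
  have h2 := hconj _ (Subgroup.inv_mem _ hk) _ h1
  convert h2 using 1
  simp only [commutatorElement_def]
  group

lemma mem_Fc_of_germ {F : Subgroup (ℝ ≃o ℝ)}
    (hF : ∀ f : ℝ ≃o ℝ, f ∈ F ↔ InThompsonF f) {f : ℝ ≃o ℝ} (hf : f ∈ F) (hg : Germ f 0 0) : f ∈ FcSub F := by
  obtain ⟨ε, he, h0, h1⟩ := hg
  obtain ⟨f0, f1⟩ := Fc_fix hF hf
  refine ⟨hf, ε, he, ?_⟩
  rintro t (ht | ht)
  · rcases le_total t 0 with h | h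
    · exact f0 t h
    · rw [h0 t h ht]; simp
  · rcases le_total 1 t with h | h
    · exact f1 t h
    · rw [h1 t ht h]; simp

lemma commutator_F_le {F : Subgroup (ℝ ≃o ℝ)}
    (hF : ∀ f : ℝ ≃o ℝ, f ∈ F ↔ InThompsonF f) : ⁅F, F⁆ ≤ FcSub F := by
  rw [Subgroup.commutator_le]
  intro f hf g hg
  obtain ⟨k, l, h1⟩ := germ_of_thompson ((hF f).mp hf)
  obtain ⟨k', l', h2⟩ := germ_of_thompson ((hF g).mp hg)
  apply mem_Fc_of_germ hF
  · rw [commutatorElement_def]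
    exact F.mul_mem (F.mul_mem (F.mul_mem hf hg) (F.inv_mem hf)) (F.inv_mem hg)
  · have := ((h1.mul h2).mul h1.inv).mul h2.inv
    rw [commutatorElement_def]
    convert this using 1 <;> ring


/-! ### Generators of `H` -/

lemma XX_succ {n : ℕ} (hn : 1 ≤ n) : XX (n + 1) = XX 0 * XX n * (XX 0)⁻¹ := by
  have h0 : (0:ℝ) < (1/2)^n := by positivity
  have h1 : (1/2:ℝ)^n ≤ 1/2 := by
    calc (1/2:ℝ)^n ≤ (1/2)^1 := pow_le_pow_of_le_one (by norm_num) (by norm_num) hn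
      _ = 1/2 := by norm_num
  have h := rot_conj (a := 3/4 - (1/2)^n/2) (s := (1/2)^n/8) (a' := 3/4 - (1/2)^(n+1)/2) (u := 1/2)
    (by positivity) (by norm_num) (XX 0) (by
      intro t ht ht'
      unfold XX
      rw [rot_three (by norm_num) (by norm_num; linarith) (by norm_num; linarith), pow_succ]
      norm_num
      ring)
  have e : XX n = rot (3/4 - (1/2)^n/2) ((1/2)^n/8) := rfl
  rw [e, h]
  unfold XX
  congr 1
  rw [pow_succ]; ring

lemma XX_mem_of {K : Subgroup (ℝ ≃o ℝ)} (h0 : XX 0 ∈ K) (h1 : XX 1 ∈ K) (n : ℕ) :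
    XX (n + 1) ∈ K := by
  induction n with
  | zero => exact h1
  | succ n ih =>
    rw [XX_succ (by omega)]
    exact K.mul_mem (K.mul_mem h0 ih) (K.inv_mem h0)

lemma closure_XX_le {K : Subgroup (ℝ ≃o ℝ)} (h0 : XX 0 ∈ K) (h1 : XX 1 ∈ K) :
    Subgroup.closure (Set.range XX) ≤ K := by
  rw [Subgroup.closure_le]
  rintro _ ⟨n, rfl⟩
  cases n with
  | zero => exact h0
  | succ n => exact XX_mem_of h0 h1 n

noncomputable def nuOne : ℝ ≃o ℝ := rot 0 (1/8) * (rot (1/2) (1/8))⁻¹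

lemma nuOne_left {t : ℝ} (h : 0 ≤ t) (h' : t ≤ 1/8) : nuOne t = 2 * t := by
  unfold nuOne
  rw [RelIso.mul_apply, inv_apply_eq_of (rot_left (show t ≤ 1/2 by linarith)),
    rot_one h (by linarith)]
  ring

lemma nuOne_right {t : ℝ} (h : 7/8 ≤ t) (h' : t ≤ 1) : nuOne t = 2 * t - 1 := by
  unfold nuOne
  have : (rot (1/2) (1/8))⁻¹ t = 2 * t - 1 := by
    apply inv_apply_eq_of
    rw [rot_three (by norm_num) (by linarith) (by linarith)]
    ring
  rw [RelIso.mul_apply, this, rot_right (by linarith)]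

lemma nuOne_germ : Germ nuOne 1 1 := by
  refine ⟨1/8, by norm_num, ?_, ?_⟩
  · intro t h h'
    rw [nuOne_left h h']; simp
  · intro t h h'
    rw [nuOne_right (by linarith) h']
    simp; ring

lemma nuOne_pow_left (n : ℕ) : (nuOne^n) (1/4/2^n) = 1/4 := by
  induction n with
  | zero => norm_num
  | succ n ih =>
    have h1 : (1:ℝ) ≤ 2^n := one_le_pow₀ (by norm_num)
    have h2 : 1/4/2^n ≤ (1/4:ℝ) := div_le_self (by norm_num) h1
    have e : (1/4/2^(n+1) : ℝ) = 1/4/2^n/2 := by rw [pow_succ]; field_simp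
    rw [pow_succ nuOne, RelIso.mul_apply, e, nuOne_left (by positivity) (by linarith)]
    rw [mul_div_cancel₀ _ (by norm_num)]
    exact ih

lemma nuOne_pow_right (n : ℕ) : (nuOne^n) (1 - 1/4/2^n) = 3/4 := by
  induction n with
  | zero => norm_num
  | succ n ih =>
    have h1 : (1:ℝ) ≤ 2^n := one_le_pow₀ (by norm_num)
    have h2 : 1/4/2^n ≤ (1/4:ℝ) := div_le_self (by norm_num) h1
    have h3 : 0 < (1/4/2^n:ℝ) := by positivity
    have e : (1/4/2^(n+1) : ℝ) = 1/4/2^n/2 := by rw [pow_succ]; field_simp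
    rw [pow_succ nuOne, RelIso.mul_apply, e, nuOne_right (by linarith) (by linarith)]
    have e2 : (2 * (1 - 1/4/2^n/2) - 1 : ℝ) = 1 - 1/4/2^n := by ring
    rw [e2]
    exact ih

lemma nuOne_mem {F : Subgroup (ℝ ≃o ℝ)}
    (hF : ∀ f : ℝ ≃o ℝ, f ∈ F ↔ InThompsonF f) : nuOne ∈ F := by
  have d8 : IsDyadic (1/8:ℝ) := ⟨1, 3, by norm_num⟩
  have d2 : IsDyadic (1/2:ℝ) := ⟨1, 1, by norm_num⟩
  have d0 : IsDyadic (0:ℝ) := ⟨0, 0, by norm_num⟩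
  exact F.mul_mem ((hF _).mpr (rot_thompson d0 d8 le_rfl (by norm_num) (by norm_num)))
    (F.inv_mem ((hF _).mpr (rot_thompson d2 d8 (by norm_num) (by norm_num) (by norm_num))))

lemma Fc_le_of {F : Subgroup (ℝ ≃o ℝ)}
    (hF : ∀ f : ℝ ≃o ℝ, f ∈ F ↔ InThompsonF f) {K : Subgroup (ℝ ≃o ℝ)}
    (hn : nuOne ∈ K) (h0 : XX 0 ∈ K) (h1 : XX 1 ∈ K) : FcSub F ≤ K := by
  intro f hf
  obtain ⟨ε, he, he1, h⟩ := Fc_supp hf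
  obtain ⟨n, hn'⟩ := exists_pow_lt_of_lt_one he (show (1/2:ℝ) < 1 by norm_num)
  have e : (1/2:ℝ)^n = 1/2^n := by rw [div_pow, one_pow]
  have hle : (1/4/2^n:ℝ) ≤ ε := by
    have : (1/4/2^n:ℝ) = 1/4 * (1/2^n) := by ring
    rw [e] at hn'
    have hp : (0:ℝ) < 1/2^n := by positivity
    linarith
  have hkF : nuOne^n ∈ F := F.pow_mem (nuOne_mem hF) n
  have hkK : nuOne^n ∈ K := K.pow_mem hn n
  obtain ⟨k, hk⟩ : ∃ k, k = nuOne^n := ⟨_, rfl⟩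
  have kl := nuOne_pow_left n
  have kr := nuOne_pow_right n
  rw [← hk] at kl kr hkF hkK
  have h2 : k * f * k⁻¹ ∈ Subgroup.closure (Set.range XX) := by
    apply Fc_small_mem hF (F.mul_mem (F.mul_mem hkF hf.1) (F.inv_mem hkF))
    intro x hx
    refine Fc_conj_supp (ε := 1/4/2^n) (p := 1/4) (q := 3/4) ?_ ?_ x ?_
    · rintro t (ht | ht)
      · exact h t (Or.inl (by linarith))
      · exact h t (Or.inr (by linarith))
    · intro t ht ht'
      constructor
      · rw [← kl]; exact k.strictMono ht
      · rw [← kr]; exact k.strictMono ht'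
    · simp only [Set.mem_Icc, not_and_or, not_le] at hx
      exact hx.imp le_of_lt le_of_lt
  have h3 := K.mul_mem (K.mul_mem (K.inv_mem hkK) (closure_XX_le h0 h1 h2)) hkK
  convert h3 using 1
  group

lemma inH_iff {f : ℝ ≃o ℝ} : InH f ↔ InThompsonF f ∧ ∃ k : ℤ, Germ f k k := by
  constructor
  · rintro ⟨h, k, ε, he, h0, h1⟩
    exact ⟨h, k, ε, he, fun t a b => h0 t ⟨a, b⟩, fun t a b => h1 t ⟨a, b⟩⟩
  · rintro ⟨h, k, ε, he, h0, h1⟩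
    exact ⟨h, k, ε, he, fun t a => h0 t a.1 a.2, fun t a => h1 t a.1 a.2⟩

lemma Fc_germ {F : Subgroup (ℝ ≃o ℝ)} {f : ℝ ≃o ℝ} (hf : f ∈ FcSub F) : Germ f 0 0 := by
  obtain ⟨_, ε, he, h⟩ := hf
  refine ⟨ε, he, fun t _ a => ?_, fun t a _ => ?_⟩
  · rw [h t (Or.inl a)]; simp
  · rw [h t (Or.inr a)]; simp

lemma Germ.zpow {f : ℝ ≃o ℝ} {k l : ℤ} (hf : Germ f k l) (n : ℤ) : Germ (f^n) (n * k) (n * l) := by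
  have hnat : ∀ n : ℕ, Germ (f^n) (n * k) (n * l) := by
    intro n
    induction n with
    | zero => exact ⟨1, one_pos, fun t _ _ => by simp, fun t _ _ => by simp⟩
    | succ n ih =>
      have := ih.mul hf
      rw [pow_succ]
      convert this using 1 <;> push_cast <;> ring
  cases n with
  | ofNat n => simpa using hnat n
  | negSucc n =>
    have := (hnat (n+1)).inv
    rw [zpow_negSucc]
    convert this using 1 <;> rw [Int.negSucc_eq] <;> push_cast <;> ring

lemma H_le_of {F : Subgroup (ℝ ≃o ℝ)}
    (hF : ∀ f : ℝ ≃o ℝ, f ∈ F ↔ InThompsonF f) {K : Subgroup (ℝ ≃o ℝ)}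
    (hn : nuOne ∈ K) (h0 : XX 0 ∈ K) (h1 : XX 1 ∈ K) {f : ℝ ≃o ℝ} (hf : InH f) : f ∈ K := by
  obtain ⟨hfF, k, hk⟩ := inH_iff.mp hf
  have hg : Germ (f * nuOne^(-k)) 0 0 := by
    have := hk.mul (nuOne_germ.zpow (-k))
    convert this using 1 <;> ring
  have h2 := Fc_le_of hF hn h0 h1
    (mem_Fc_of_germ hF (F.mul_mem ((hF f).mpr hfF) (F.zpow_mem (nuOne_mem hF) (-k))) hg)
  have h3 := K.mul_mem h2 (K.zpow_mem hn k)
  convert h3 using 1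
  group

lemma mem_Fc_iff {F : Subgroup (ℝ ≃o ℝ)}
    (hF : ∀ f : ℝ ≃o ℝ, f ∈ F ↔ InThompsonF f) (f : ℝ ≃o ℝ) :
    f ∈ FcSub F ↔ f ∈ F ∧ closure {x : ℝ | f x ≠ x} ⊆ Set.Ioo (0 : ℝ) 1 := by
  constructor
  · rintro ⟨hf, ε, he, h⟩
    refine ⟨hf, ?_⟩
    have h1 : closure {x : ℝ | f x ≠ x} ⊆ Set.Icc ε (1 - ε) := by
      apply closure_minimal _ isClosed_Icc
      intro x hx
      by_contra hcon
      simp only [Set.mem_Icc, not_and_or, not_le] at hcon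
      exact hx (h x (hcon.imp le_of_lt le_of_lt))
    exact h1.trans (Set.Icc_subset_Ioo he (by linarith))
  · rintro ⟨hf, h⟩
    obtain ⟨f0, f1⟩ := Fc_fix hF hf
    have n0 : (0:ℝ) ∉ closure {x : ℝ | f x ≠ x} := fun h' => lt_irrefl _ (h h').1
    have n1 : (1:ℝ) ∉ closure {x : ℝ | f x ≠ x} := fun h' => lt_irrefl _ (h h').2
    rw [Metric.mem_closure_iff] at n0 n1
    push Not at n0 n1
    obtain ⟨ε, he, h0⟩ := n0
    obtain ⟨δ, hd, h1⟩ := n1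
    refine ⟨hf, min (ε/2) (δ/2), by positivity, ?_⟩
    have l1 := min_le_left (ε/2) (δ/2)
    have l2 := min_le_right (ε/2) (δ/2)
    rintro t (ht | ht)
    · rcases le_total t 0 with h' | h'
      · exact f0 t h'
      · by_contra hcon
        have := h0 t hcon
        rw [Real.dist_eq, zero_sub, abs_neg, abs_of_nonneg h'] at this
        linarith
    · rcases le_total 1 t with h' | h'
      · exact f1 t h'
      · by_contra hcon
        have := h1 t hcon
        rw [Real.dist_eq, abs_of_nonneg (by linarith)] at this
        linarith

lemma Fc_isSimple {F : Subgroup (ℝ ≃o ℝ)}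
    (hF : ∀ f : ℝ ≃o ℝ, f ∈ F ↔ InThompsonF f) : IsSimpleGroup ↥(FcSub F) := by
  have hnt : Nontrivial ↥(FcSub F) := by
    have d8 : IsDyadic (1/8:ℝ) := ⟨1, 3, by norm_num⟩
    have hm : rot (1/8) (1/8) ∈ FcSub F :=
      rot_mem_Fc hF d8 d8 (by norm_num) (by norm_num) (by norm_num)
    refine ⟨⟨⟨_, hm⟩, 1, fun e => ?_⟩⟩
    have e' : rot (1/8) (1/8) = 1 := congrArg Subtype.val e
    have h := rot_lt (a := 1/8) (s := 1/8) (t := 1/4) (by norm_num) (by norm_num)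
    rw [e'] at h
    exact lt_irrefl _ h
  refine { hnt with eq_bot_or_eq_top_of_normal := ?_ }
  intro N hN
  by_cases hb : N = ⊥
  · exact Or.inl hb
  right
  have h := Fc_simple hF (N.map (FcSub F).subtype) (Subgroup.map_subtype_le N) (by
    rintro k hk _ ⟨g, hg, rfl⟩
    exact ⟨⟨k, hk⟩ * g * ⟨k, hk⟩⁻¹, hN.conj_mem g hg ⟨k, hk⟩, rfl⟩) (by
    intro hcon
    exact hb ((Subgroup.map_eq_bot_iff_of_injective N (FcSub F).subtype_injective).mp hcon))
  rw [eq_top_iff]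
  rintro ⟨x, hx⟩ -
  obtain ⟨y, hy, e⟩ := h hx
  have : y = ⟨x, hx⟩ := Subtype.ext e
  rwa [← this]

/-- The subgroup `H ≤ F` of elements whose slopes at `0` and `1`
coincide is generated by three elements, its commutator subgroup `H'` is simple, `H'`
consists precisely of the elements of `F` whose support has closure contained in the
open interval `(0,1)`, and `H' = F'`. -/
theorem H_three_generated_commutator_simple
    (F H : Subgroup (ℝ ≃o ℝ))
    (hF : ∀ f : ℝ ≃o ℝ, f ∈ F ↔ InThompsonF f)
    (hH : ∀ f : ℝ ≃o ℝ, f ∈ H ↔ InH f) :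
    (∃ ν₁ ν₂ ν₃ : ℝ ≃o ℝ, Subgroup.closure {ν₁, ν₂, ν₃} = H) ∧
    IsSimpleGroup ↥(commutator ↥H) ∧
    (∀ f : ℝ ≃o ℝ, f ∈ (commutator ↥H).map H.subtype ↔
      f ∈ F ∧ closure {x : ℝ | f x ≠ x} ⊆ Set.Ioo (0 : ℝ) 1) ∧
    (commutator ↥H).map H.subtype = (commutator ↥F).map F.subtype := by
  have hXc : ∀ i, XX i ∈ FcSub F := fun i => Subgroup.commutator_le_self _ (XX_mem_comm hF i)
  have hFcH : FcSub F ≤ H := fun f hf =>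
    (hH f).mpr (inH_iff.mpr ⟨(hF f).mp hf.1, 0, Fc_germ hf⟩)
  have hHF : H ≤ F := fun f hf => (hF f).mpr ((hH f).mp hf).1
  have hFF : ⁅F, F⁆ = FcSub F := le_antisymm (commutator_F_le hF)
    ((Fc_perfect hF).trans (Subgroup.commutator_mono (hFcH.trans hHF) (hFcH.trans hHF)))
  have hHH : ⁅H, H⁆ = FcSub F := le_antisymm ((Subgroup.commutator_mono hHF hHF).trans hFF.le)
    ((Fc_perfect hF).trans (Subgroup.commutator_mono hFcH hFcH))
  refine ⟨⟨nuOne, XX 0, XX 1, le_antisymm ?_ ?_⟩, ?_, ?_, ?_⟩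
  · rw [Subgroup.closure_le]
    rintro f (rfl | rfl | rfl)
    · exact (hH _).mpr (inH_iff.mpr ⟨(hF _).mp (nuOne_mem hF), 1, nuOne_germ⟩)
    · exact hFcH (hXc 0)
    · exact hFcH (hXc 1)
  · intro f hf
    exact H_le_of hF (Subgroup.subset_closure (by simp)) (Subgroup.subset_closure (by simp))
      (Subgroup.subset_closure (by simp)) ((hH f).mp hf)
  · have hs := Fc_isSimple hF
    rw [← hHH, ← Subgroup.map_subtype_commutator] at hs
    exact ((commutator ↥H).equivMapOfInjective H.subtype H.subtype_injective).isSimpleGroup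
  · intro f
    rw [Subgroup.map_subtype_commutator, hHH]
    exact mem_Fc_iff hF f
  · rw [Subgroup.map_subtype_commutator, Subgroup.map_subtype_commutator, hHH, hFF]
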